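/- arXiv:2206.07017 — 2 statements merged into one kernel-verified Lean document; each statement's English description precedes it below -/
import Mathlib

section
/- Let α be a positive natural number (a finite ordinal) and let X = [1, ω^α] be the set of ordinals β with 1 ≤ β ≤ ω^α (ordinal exponentiation), equipped with the order topology, and let G be the group of homeomorphisms of X onto itself. Then G has the small index property: every subgroup H of G whose index, as a cardinal, is strictly less than 2^ℵ₀ contains the pointwise stabilizer {g ∈ G : g(B) = B for all B ∈ A} of some finite set A of clopen subsets of X. -/
/-!
The space `[1, ω ^ (n + 1)]` is the one-point compactification of `ℕ × W` for `W = [1, ω ^ n]`, and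
every homeomorphism fixes the point at infinity, the only point of the `(n + 1)`-st derived set. By
induction on `n` it thus suffices to pass from `W` to `ℕ × W`. Let `H` be a subgroup of small index
in the homeomorphism group of `ℕ × W`.

* A diagonal argument yields an infinite set of copies of `W` such that `H` contains all commutators
  of homeomorphisms supported there. Every homeomorphism supported over a suitable infinite subset
  `S` is such a commutator, by an infinite swindle along a shift of the copies.
* Choose continuum many pairwise almost disjoint sets `A ξ ⊆ ℕ` and permutations of `ℕ` which map
  `S` onto the complements of the `A ξ`. Two of these permutations, say for `ξ` and `η`, lie in the
  same left coset of `H`. Hence, up to a permutation of the copies, `H` contains everything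
  supported over `(A ξ)ᶜ` and everything supported over `(A η)ᶜ`. As `W` is compact, it follows that
  `H` contains everything supported over `(A ξ)ᶜ ∪ (A η)ᶜ`, which is cofinite.
* On each of the finitely many remaining copies, `H` is controlled by the small index property
  of `W`.
-/

open Ordinal Topology

noncomputable section

/-- The ordinal interval `[1, γ]`, i.e. the set of ordinals `β` with `1 ≤ β ≤ γ`, with the
subspace topology induced from the order topology on `Ordinal` (equivalently, its order
topology, since it is order-connected). -/
abbrev OrdIcc (γ : Ordinal) : Type _ := ↥(Set.Icc (1 : Ordinal) γ)

/-- The group of self-homeomorphisms of a topological space, under composition. -/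
instance homeoGroup {Y : Type*} [TopologicalSpace Y] : Group (Y ≃ₜ Y) where
  mul f g := g.trans f
  one := Homeomorph.refl Y
  inv := Homeomorph.symm
  mul_assoc f g h := rfl
  one_mul f := Homeomorph.ext fun _ => rfl
  mul_one f := Homeomorph.ext fun _ => rfl
  inv_mul_cancel f := Homeomorph.ext fun x => f.symm_apply_apply x

open Set Function Cardinal
open scoped commutatorElement

section SmallIndex

variable {G G' : Type*} [Group G] [Group G']

/-- A subgroup of index less than `2 ^ ℵ₀`, see `smallIndex_iff_mk_quotient_lt`. The definition is
the pigeonhole principle for its left cosets, which does not mention the universe of `G`. -/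
def SmallIndex (H : Subgroup G) : Prop :=
  ∀ f : (ℕ → Bool) → G, ∃ ξ η, ξ ≠ η ∧ (f ξ)⁻¹ * f η ∈ H

theorem smallIndex_iff_mk_quotient_lt {H : Subgroup G} :
    SmallIndex H ↔ #(G ⧸ H) < 2 ^ ℵ₀ := by
  have hcard : 2 ^ ℵ₀ ≤ #(G ⧸ H) ↔ Nonempty ((ℕ → Bool) ↪ G ⧸ H) := by
    rw [← lift_mk_le']
    simp
  rw [← not_le, hcard, not_nonempty_iff, SmallIndex]
  refine ⟨fun h ↦ ⟨fun F ↦ ?_⟩, fun h f ↦ ?_⟩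
  · obtain ⟨ξ, η, hne, hmem⟩ := h fun ξ ↦ (F ξ).out
    refine hne (F.injective ?_)
    simpa using QuotientGroup.eq.2 hmem
  · by_contra! hf
    refine h.false ⟨fun ξ ↦ (f ξ : G ⧸ H), fun ξ η hξη ↦ ?_⟩
    by_contra hne
    exact hf ξ η hne (QuotientGroup.eq.1 hξη)

theorem SmallIndex.comap {H : Subgroup G'} (hH : SmallIndex H) (φ : G →* G') :
    SmallIndex (H.comap φ) := fun f ↦ by
  simpa using hH (φ ∘ f)

end SmallIndex

section Support

variable {Y κ : Type*} [TopologicalSpace Y] {S T : Set Y} {f g : Y ≃ₜ Y} {x : Y}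

/-- The subgroup of the homeomorphisms of `Y` which fix every point outside `S`. -/
def supportedIn (S : Set Y) : Subgroup (Y ≃ₜ Y) where
  carrier := {g | ∀ x ∉ S, g x = x}
  mul_mem' hf hg x hx := by rw [Homeomorph.mul_apply, hg x hx, hf x hx]
  one_mem' _ _ := rfl
  inv_mem' {g} hg x hx := g.symm_apply_eq.2 (hg x hx).symm

theorem supportedIn_mono (h : S ⊆ T) : supportedIn S ≤ supportedIn T :=
  fun _ hg x hx ↦ hg x fun hxS ↦ hx (h hxS)

theorem mem_supportedIn_univ (g : Y ≃ₜ Y) : g ∈ supportedIn univ :=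
  fun x hx ↦ absurd (mem_univ x) hx

theorem apply_mem_iff_of_mem_supportedIn (hg : g ∈ supportedIn S) : g x ∈ S ↔ x ∈ S := by
  refine ⟨fun hgx ↦ by_contra fun hx ↦ hx (hg x hx ▸ hgx), fun hx ↦ by_contra fun hgx ↦ ?_⟩
  exact hgx (by rwa [g.injective (hg _ hgx)])

theorem commute_of_disjoint_supports (hf : f ∈ supportedIn S) (hg : g ∈ supportedIn T)
    (hST : Disjoint S T) : Commute f g := by
  ext x
  rw [Homeomorph.mul_apply, Homeomorph.mul_apply]
  by_cases hx : x ∈ S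
  · have hfx := (apply_mem_iff_of_mem_supportedIn hf).2 hx
    rw [hg x (hST.notMem_of_mem_left hx), hg _ (hST.notMem_of_mem_left hfx)]
  · rw [hf x hx]
    by_cases hxT : x ∈ T
    · exact hf _ (hST.notMem_of_mem_right ((apply_mem_iff_of_mem_supportedIn hg).2 hxT))
    · rw [hg x hxT, hf x hx]

theorem supportedIn_preimage_le {H : Subgroup (Y ≃ₜ Y)} (hS : supportedIn S ≤ H) (hf : f ∈ H) :
    supportedIn (f ⁻¹' S) ≤ H := fun g hg ↦ by
  have hconj : f * g * f⁻¹ ∈ supportedIn S := fun x hx ↦ by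
    simp [hg (f.symm x) (by simpa using hx)]
  simpa [mul_assoc] using H.mul_mem (H.mul_mem (H.inv_mem hf) (hS hconj)) hf

/-- The homeomorphism which acts on each level set `q ⁻¹' {j}` of a locally constant map `q` by the
given homeomorphism `b j` supported in that level set. -/
def glue (q : Y → κ) (hq : IsLocallyConstant q) (b : κ → Y ≃ₜ Y)
    (hb : ∀ j, b j ∈ supportedIn (q ⁻¹' {j})) : Y ≃ₜ Y :=
  have apply_level {c : κ → Y ≃ₜ Y} (hc : ∀ j, c j ∈ supportedIn (q ⁻¹' {j})) (x) :
      q (c (q x) x) = q x :=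
    (apply_mem_iff_of_mem_supportedIn (hc (q x))).2 rfl
  have continuous_glue (c : κ → Y ≃ₜ Y) : Continuous fun x ↦ c (q x) x :=
    continuous_iff_continuousAt.2 fun x ↦ (c (q x)).continuous.continuousAt.congr <|
      (hq.eventually_eq x).mono fun _ hy ↦ by simp only [hy]
  { toFun x := b (q x) x
    invFun x := (b (q x))⁻¹ x
    left_inv x := by simp only [apply_level hb, Homeomorph.inv_apply, Homeomorph.symm_apply_apply]
    right_inv x := by
      have hx : q ((b (q x)).symm x) = q x := apply_level (fun j ↦ inv_mem (hb j)) x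
      simp only [hx, Homeomorph.inv_apply, Homeomorph.apply_symm_apply]
    continuous_toFun := continuous_glue b
    continuous_invFun := continuous_glue b⁻¹ }

theorem glue_apply {q : Y → κ} (hq : IsLocallyConstant q) {b : κ → Y ≃ₜ Y}
    (hb : ∀ j, b j ∈ supportedIn (q ⁻¹' {j})) (x : Y) : glue q hq b hb x = b (q x) x :=
  rfl

theorem glue_mem_supportedIn {q : Y → κ} (hq : IsLocallyConstant q) {b : κ → Y ≃ₜ Y}
    (hb : ∀ j, b j ∈ supportedIn (q ⁻¹' {j})) (hbS : ∀ j, b j ∈ supportedIn S) :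
    glue q hq b hb ∈ supportedIn S :=
  fun x hx ↦ hbS (q x) x hx

theorem exists_mem_supportedIn_eqOn_of_image_eq (hS : IsClopen S) (hf : f '' S = S) :
    ∃ g ∈ supportedIn S, EqOn g f S := by
  classical
  have continuous_piecewise_id (k : Y ≃ₜ Y) : Continuous (S.piecewise k id) :=
    k.continuous.piecewise (by simp [hS.frontier_eq]) continuous_id
  have hfS {x} (hx : x ∈ S) : f x ∈ S := hf ▸ mem_image_of_mem f hx
  have hfS' {x} (hx : x ∈ S) : f.symm x ∈ S := by
    rw [← hf] at hx
    obtain ⟨y, hy, rfl⟩ := hx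
    simpa using hy
  let g : Y ≃ₜ Y :=
    { toFun := S.piecewise f id
      invFun := S.piecewise f.symm id
      left_inv x := by by_cases hx : x ∈ S <;> simp [hx, hfS]
      right_inv x := by by_cases hx : x ∈ S <;> simp [hx, hfS']
      continuous_toFun := continuous_piecewise_id f
      continuous_invFun := continuous_piecewise_id f.symm }
  exact ⟨g, fun x hx ↦ S.piecewise_eq_of_notMem f id hx, S.piecewise_eqOn f id⟩

theorem exists_mem_supportedIn_eqOn_of_disjoint (hS : IsClopen S) (hf : Disjoint S (f '' S)) :
    ∃ v ∈ supportedIn (S ∪ f '' S), EqOn v f S := by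
  classical
  let v : Y → Y := S.piecewise f ((f '' S).piecewise f.symm id)
  have v_of_mem {x} (hx : x ∈ S) : v x = f x := piecewise_eq_of_mem _ _ _ hx
  have v_apply_of_mem {x} (hx : x ∈ S) : v (f x) = x := by
    have hfx := mem_image_of_mem f hx
    simp [v, hf.notMem_of_mem_right hfx, hfx]
  have v_of_notMem {x} (hx : x ∉ S ∪ f '' S) : v x = x := by
    rw [mem_union, not_or] at hx
    simp [v, hx]
  have hv : Involutive v := fun x ↦ by
    by_cases hx : x ∈ S ∪ f '' S
    · obtain hx | ⟨x, hx, rfl⟩ := hx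
      · rw [v_of_mem hx, v_apply_of_mem hx]
      · rw [v_apply_of_mem hx, v_of_mem hx]
    · rw [v_of_notMem hx, v_of_notMem hx]
  have hfS : IsClopen (f '' S) := ⟨f.isClosed_image.2 hS.1, f.isOpen_image.2 hS.2⟩
  have hvc : Continuous v := by
    refine f.continuous.piecewise (by simp [hS.frontier_eq]) ?_
    exact f.symm.continuous.piecewise (by simp [hfS.frontier_eq]) continuous_id
  exact ⟨⟨hv.toPerm, hvc, hvc⟩, fun x hx ↦ v_of_notMem hx, fun x hx ↦ v_of_mem hx⟩

theorem exists_mem_supportedIn_forall_apply_eq (hS : IsClopen S)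
    (hfg : Disjoint (f '' S) (g '' S)) :
    ∃ v ∈ supportedIn (f '' S ∪ g '' S), ∀ x ∈ S, v (f x) = g x := by
  have himage : ⇑(g * f⁻¹) '' (f '' S) = g '' S := by simp [image_image]
  rw [← himage] at hfg ⊢
  obtain ⟨v, hv, hvf⟩ := exists_mem_supportedIn_eqOn_of_disjoint
    ⟨f.isClosed_image.2 hS.1, f.isOpen_image.2 hS.2⟩ hfg
  exact ⟨v, hv, fun x hx ↦ by simpa using hvf (mem_image_of_mem f hx)⟩

end Support

section Commutators

variable {Y : Type*} [TopologicalSpace Y] {H : Subgroup (Y ≃ₜ Y)}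

theorem commutatorElement_mul_left_of_commute {G : Type*} [Group G] {a b d : G}
    (h : Commute d b) : ⁅a * d, b⁆ = ⁅a, b⁆ := by
  rw [commutatorElement_def, commutatorElement_def, mul_assoc a d b, h.eq]
  group

theorem commutatorElement_mul_right_of_commute {G : Type*} [Group G] {a b c : G}
    (h : Commute a c) : ⁅a, b * c⁆ = ⁅a, b⁆ := by
  rw [← commutatorElement_inv, commutatorElement_mul_left_of_commute h.symm, commutatorElement_inv]

/-- If `a j` violated the conclusion at every `j`, then gluing along each `ξ : ℕ → Bool` those
`a j` with `ξ j = true` would give continuum many elements in different cosets of `H`. -/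
theorem SmallIndex.exists_forall_exists_eqOn (hH : SmallIndex H) {q : Y → ℕ}
    (hq : IsLocallyConstant q) (U : Set Y) :
    ∃ j, ∀ a ∈ supportedIn (U ∩ q ⁻¹' {j}), ∃ h ∈ H, h ∈ supportedIn U ∧ EqOn h a (q ⁻¹' {j}) := by
  by_contra! hcon
  choose a ha haH using hcon
  let b (ξ : ℕ → Bool) (j : ℕ) : Y ≃ₜ Y := if ξ j then a j else 1
  have hb (ξ j) : b ξ j ∈ supportedIn (U ∩ q ⁻¹' {j}) := by
    dsimp only [b]
    split_ifs
    exacts [ha j, one_mem _]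
  let g (ξ : ℕ → Bool) := glue q hq (b ξ) fun j ↦ supportedIn_mono inter_subset_right (hb ξ j)
  have hgU (ξ) : g ξ ∈ supportedIn U :=
    glue_mem_supportedIn _ _ fun j ↦ supportedIn_mono inter_subset_left (hb ξ j)
  obtain ⟨ξ, η, j, hξ, hη, hmem⟩ :
      ∃ ξ η : ℕ → Bool, ∃ j, ξ j = false ∧ η j = true ∧ (g ξ)⁻¹ * g η ∈ H := by
    obtain ⟨ξ, η, hne, hmem⟩ := hH g
    obtain ⟨j, hj⟩ := Function.ne_iff.1 hne
    cases hξ : ξ j with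
    | false => exact ⟨ξ, η, j, hξ, by simpa [hξ] using hj.symm, hmem⟩
    | true => exact ⟨η, ξ, j, by simpa [hξ] using hj.symm, hξ, by simpa using H.inv_mem hmem⟩
  refine haH j _ hmem (mul_mem (inv_mem (hgU ξ)) (hgU η)) fun x hx ↦ ?_
  have hξx : g ξ (a j x) = a j x := by
    have hax : q (a j x) = j := (apply_mem_iff_of_mem_supportedIn
      (supportedIn_mono inter_subset_right (ha j))).2 hx
    simp [g, b, glue_apply, hax, hξ]
  have hηx : g η x = a j x := by
    rw [mem_preimage, mem_singleton_iff] at hx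
    simp [g, b, glue_apply, hx, hη]
  rw [Homeomorph.mul_apply, hηx, Homeomorph.inv_apply, Homeomorph.symm_apply_eq, hξx]

/-- `h` differs from `a` by a factor supported off `q₁ ⁻¹' {j}`, hence commuting with `k`, and `k`
differs from `b` by a factor supported off `q₂ ⁻¹' {m}`, hence commuting with `a`. -/
theorem SmallIndex.exists_commutator_mem (hH : SmallIndex H) {q₁ q₂ : Y → ℕ}
    (hq₁ : IsLocallyConstant q₁) (hq₂ : IsLocallyConstant q₂) :
    ∃ j m, ∀ a ∈ supportedIn (q₁ ⁻¹' {j} ∩ q₂ ⁻¹' {m}),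
      ∀ b ∈ supportedIn (q₁ ⁻¹' {j} ∩ q₂ ⁻¹' {m}), ⁅a, b⁆ ∈ H := by
  obtain ⟨j, hj⟩ := hH.exists_forall_exists_eqOn hq₁ univ
  obtain ⟨m, hm⟩ := hH.exists_forall_exists_eqOn hq₂ (q₁ ⁻¹' {j})
  refine ⟨j, m, fun a ha b hb ↦ ?_⟩
  obtain ⟨h, hhH, -, hha⟩ := hj a <| by simpa using supportedIn_mono inter_subset_left ha
  obtain ⟨k, hkH, hk, hkb⟩ := hm b hb
  have hd : Commute (a⁻¹ * h) k := by
    refine commute_of_disjoint_supports (S := (q₁ ⁻¹' {j})ᶜ) (fun x hx ↦ ?_) hk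
      disjoint_compl_left
    simp [hha (not_not.1 hx)]
  have hc : Commute a (b⁻¹ * k) := by
    refine commute_of_disjoint_supports (T := (q₂ ⁻¹' {m})ᶜ) ha (fun x hx ↦ ?_)
      (disjoint_compl_right.mono_left inter_subset_right)
    simp [hkb (not_not.1 hx)]
  have hcomm : ⁅a, b⁆ = ⁅h, k⁆ := by
    rw [← mul_inv_cancel_left a h, commutatorElement_mul_left_of_commute hd,
      ← mul_inv_cancel_left b k, commutatorElement_mul_right_of_commute hc]
  rw [hcomm, commutatorElement_def]
  exact H.mul_mem (H.mul_mem (H.mul_mem hhH hkH) (H.inv_mem hhH)) (H.inv_mem hkH)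

/-- The homeomorphism `s` shifts the levels `1, 2, …` upwards, so the conjugates of `g` by the
powers of `s` are supported in different levels; their product `a` satisfies `a * s = g * s * a`. -/
theorem exists_eq_commutator_of_shift {s g : Y ≃ₜ Y} {lev : Y → ℕ} (hlev : IsLocallyConstant lev)
    (hs : ∀ x, lev x ≠ 0 → lev (s x) = lev x + 1) (hs₀ : ∀ x, lev x = 0 → lev (s x) ≤ 1)
    (hg : g ∈ supportedIn (lev ⁻¹' {1})) :
    ∃ a ∈ supportedIn (lev ⁻¹' {0})ᶜ, g = ⁅a, s⁆ := by
  let b : ℕ → Y ≃ₜ Y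
    | 0 => 1
    | n + 1 => s ^ n * g * (s ^ n)⁻¹
  have b_add_two (n) : b (n + 2) = s * b (n + 1) * s⁻¹ := by
    simp only [b, pow_succ', mul_inv_rev, mul_assoc]
  have hb (n) : b n ∈ supportedIn (lev ⁻¹' {n}) := by
    induction n using Nat.twoStepInduction with
    | zero => exact one_mem _
    | one => simpa [b] using hg
    | more n _ ih =>
      intro x hx
      have hsx : lev (s.symm x) ≠ n + 1 := fun h ↦ hx <| by
        simpa [h] using hs (s.symm x) (by simp [h])
      rw [b_add_two, Homeomorph.mul_apply, Homeomorph.mul_apply, Homeomorph.inv_apply, ih _ hsx,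
        Homeomorph.apply_symm_apply]
  let a := glue lev hlev b hb
  have ha : a ∈ supportedIn (lev ⁻¹' {0})ᶜ := fun x hx ↦ by
    rw [mem_compl_iff, not_not, mem_preimage, mem_singleton_iff] at hx
    simp [a, glue_apply, hx, b]
  have has : a * s = g * s * a := by
    ext x
    simp only [Homeomorph.mul_apply, a, glue_apply]
    cases hx : lev x with
    | zero =>
      obtain hsx | hsx : lev (s x) = 0 ∨ lev (s x) = 1 := by have := hs₀ x hx; omega
      · have hgs : g (s x) = s x := hg _ (by simp [hsx])
        simp [hsx, b, hgs]
      · simp [hsx, b]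
    | succ n =>
      have hbx : lev (b (n + 1) x) = n + 1 := (apply_mem_iff_of_mem_supportedIn (hb (n + 1))).2 hx
      have hgs : g (s (b (n + 1) x)) = s (b (n + 1) x) :=
        hg _ (by simp [hs _ (hbx.trans_ne n.succ_ne_zero), hbx])
      rw [hs x (hx.trans_ne n.succ_ne_zero), hx, b_add_two, hgs]
      simp
  exact ⟨a, ha, by rw [commutatorElement_def, has, mul_assoc g s a]; group⟩

end Commutators

section InfiniteSets

variable {α β : Type*}

theorem exists_perm_preimage_eq [Countable α] {s t u : Set α} (hs : s.Infinite) (ht : t.Infinite)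
    (hsu : s ⊆ u) (htu : t ⊆ u) (hus : (u \ s).Infinite) (hut : (u \ t).Infinite) :
    ∃ σ : Equiv.Perm α, (∀ i ∉ u, σ i = i) ∧ σ ⁻¹' t = s := by
  classical
  have := hs.to_subtype
  have := ht.to_subtype
  have := hus.to_subtype
  have := hut.to_subtype
  obtain ⟨e⟩ : Nonempty (s ≃ t) := nonempty_equiv_of_countable
  obtain ⟨e'⟩ : Nonempty (↥(u \ s) ≃ ↥(u \ t)) := nonempty_equiv_of_countable
  let τ : Equiv.Perm u := (Equiv.Set.sumDiffSubset hsu).symm.trans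
    ((e.sumCongr e').trans (Equiv.Set.sumDiffSubset htu))
  have hτ (i : u) : (τ i : α) ∈ t ↔ (i : α) ∈ s := by
    by_cases hi : (i : α) ∈ s
    · simp [τ, Equiv.Set.sumDiffSubset_symm_apply_of_mem hsu hi, hi]
    · simp [τ, Equiv.Set.sumDiffSubset_symm_apply_of_notMem hsu hi, hi, (e' _).2.2]
  refine ⟨Equiv.Perm.ofSubtype τ, fun i hi ↦ Equiv.Perm.ofSubtype_apply_of_not_mem τ hi, ?_⟩
  ext i
  rw [mem_preimage]
  by_cases hi : i ∈ u
  · rw [Equiv.Perm.ofSubtype_apply_of_mem τ hi, hτ]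
  · rw [Equiv.Perm.ofSubtype_apply_of_not_mem τ hi]
    exact iff_of_false (fun h ↦ hi (htu h)) fun h ↦ hi (hsu h)

/-- A copy of `ℕ × ℤ` in `s`, shifted in the second coordinate. The levels `1, 2, …` are the
nonnegative second coordinates, everything else has level `0`. -/
theorem exists_shift_of_infinite [Countable α] {s : Set α} (hs : s.Infinite) :
    ∃ (σ : Equiv.Perm α) (lev : α → ℕ), (∀ i ∉ s, σ i = i ∧ lev i = 0) ∧
      (∀ i, lev i ≠ 0 → lev (σ i) = lev i + 1) ∧ (∀ i, lev i = 0 → lev (σ i) ≤ 1) ∧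
      (lev ⁻¹' {1}).Infinite ∧ (lev ⁻¹' {1})ᶜ.Infinite := by
  classical
  have := hs.to_subtype
  obtain ⟨e⟩ : Nonempty (s ≃ ℕ × ℤ) := nonempty_equiv_of_countable
  let τ : Equiv.Perm s := e.symm.permCongr ((Equiv.refl ℕ).prodCongr (Equiv.addRight (1 : ℤ)))
  let σ : Equiv.Perm α := Equiv.Perm.ofSubtype τ
  let lev (i : α) : ℕ := if hi : i ∈ s then ((e ⟨i, hi⟩).2 + 1).toNat else 0
  have hσ (i) (hi : i ∉ s) : σ i = i := Equiv.Perm.ofSubtype_apply_of_not_mem τ hi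
  have hlev (i) (hi : i ∉ s) : lev i = 0 := dif_neg hi
  have lev_coe (i : s) : lev i = ((e i).2 + 1).toNat := dif_pos i.2
  have lev_σ_coe (i : s) : lev (σ i) = ((e i).2 + 1 + 1).toNat := by
    rw [Equiv.Perm.ofSubtype_apply_coe, lev_coe]
    simp [τ]
  refine ⟨σ, lev, fun i hi ↦ ⟨hσ i hi, hlev i hi⟩, fun i hi ↦ ?_, fun i hi ↦ ?_, ?_, ?_⟩
  · lift i to s using by_contra fun h ↦ hi (hlev i h)
    rw [lev_coe] at hi
    rw [lev_coe, lev_σ_coe]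
    omega
  · by_cases his : i ∈ s
    · lift i to s using his
      rw [lev_coe] at hi
      rw [lev_σ_coe]
      omega
    · simp [hσ i his, hi]
  · exact infinite_of_injective_forall_mem (f := fun r : ℕ ↦ (e.symm (r, 0) : α))
      (fun r r' h ↦ by simpa using Subtype.ext h) fun r ↦ by simp [lev_coe]
  · exact infinite_of_injective_forall_mem (f := fun r : ℕ ↦ (e.symm (r, 1) : α))
      (fun r r' h ↦ by simpa using Subtype.ext h) fun r ↦ by simp [lev_coe]

theorem exists_infinite_subsets_forall_not_rel {r : α → β → Prop} {s : Set α} {t : Set β}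
    (hs : s.Infinite) (ht : t.Infinite) (hr : ∀ a, {b | r a b}.Finite)
    (hr' : ∀ b, {a | r a b}.Finite) :
    ∃ s' ⊆ s, ∃ t' ⊆ t, s'.Infinite ∧ t'.Infinite ∧ ∀ a ∈ s', ∀ b ∈ t', ¬ r a b := by
  let P (x : α × β) : Prop := x.1 ∈ s ∧ x.2 ∈ t ∧ ¬ r x.1 x.2
  let R (x y : α × β) : Prop := (x.1 ≠ y.1 ∧ x.2 ≠ y.2) ∧ ¬ r x.1 y.2 ∧ ¬ r y.1 x.2
  have : Std.Symm R := ⟨fun x y h ↦ ⟨⟨h.1.1.symm, h.1.2.symm⟩, h.2.2, h.2.1⟩⟩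
  obtain ⟨f, hP, hR⟩ := exists_seq_of_forall_finset_exists' P R fun F _ ↦ by
    have hfin : (⋃ x ∈ F, {x.1} ∪ {a | r a x.2}).Finite :=
      F.finite_toSet.biUnion fun x _ ↦ (finite_singleton _).union (hr' x.2)
    obtain ⟨a, has, ha⟩ := (hs.sdiff hfin).nonempty
    have hfin' : ({b | r a b} ∪ ⋃ x ∈ F, {x.2} ∪ {b | r x.1 b}).Finite :=
      (hr a).union (F.finite_toSet.biUnion fun x _ ↦ (finite_singleton _).union (hr x.1))
    obtain ⟨b, hbt, hb⟩ := (ht.sdiff hfin').nonempty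
    simp only [mem_union, mem_iUnion, mem_singleton_iff, mem_ofPred_eq, not_or, not_exists] at ha hb
    exact ⟨(a, b), ⟨has, hbt, hb.1⟩, fun x hx ↦
      ⟨⟨fun h ↦ (ha x hx).1 h.symm, fun h ↦ (hb.2 x hx).1 h.symm⟩, (hb.2 x hx).2, (ha x hx).2⟩⟩
  have hinj₁ : Injective fun n ↦ (f n).1 := fun m n h ↦ by_contra fun hmn ↦ (hR hmn).1.1 h
  have hinj₂ : Injective fun n ↦ (f n).2 := fun m n h ↦ by_contra fun hmn ↦ (hR hmn).1.2 h
  refine ⟨_, range_subset_iff.2 fun n ↦ (hP n).1, _, range_subset_iff.2 fun n ↦ (hP n).2.1,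
    infinite_range_of_injective hinj₁, infinite_range_of_injective hinj₂, ?_⟩
  rintro _ ⟨m, rfl⟩ _ ⟨n, rfl⟩
  obtain rfl | hmn := eq_or_ne m n
  · exact (hP m).2.2
  · exact (hR hmn).2.1

theorem exists_infinite_disjoint_union_eq {s : Set α} (hs : s.Infinite) :
    ∃ t u : Set α, t.Infinite ∧ u.Infinite ∧ Disjoint t u ∧ t ∪ u = s := by
  obtain ⟨t, u, rfl, hdisj, hcard⟩ := hs.exists_union_disjoint_cardinal_eq_of_infinite
  have hiff : t.Infinite ↔ u.Infinite := by
    rw [← infinite_coe_iff, ← infinite_coe_iff, infinite_iff, infinite_iff, hcard]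
  have := infinite_union.1 hs
  exact ⟨t, u, by tauto, by tauto, hdisj, rfl⟩

/-- The branch of the binary tree `List Bool` along `ξ`: the finite initial segments of `ξ`. -/
def branch (ξ : ℕ → Bool) : Set (List Bool) :=
  range fun n ↦ (List.range n).map ξ

theorem branch_infinite (ξ : ℕ → Bool) : (branch ξ).Infinite :=
  infinite_range_of_injective fun m n h ↦ by simpa using congrArg List.length h

theorem branch_inter_branch_finite {ξ η : ℕ → Bool} (h : ξ ≠ η) :
    (branch ξ ∩ branch η).Finite := by
  obtain ⟨k, hk⟩ := Function.ne_iff.1 h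
  refine ((finite_Iic k).image fun n ↦ (List.range n).map ξ).subset ?_
  rintro _ ⟨⟨n, rfl⟩, m, hm⟩
  refine ⟨n, ?_, rfl⟩
  obtain rfl : m = n := by simpa using congrArg List.length hm
  by_contra! hkm
  exact hk (List.map_inj_left.1 hm k (List.mem_range.2 (not_le.1 hkm))).symm

theorem exists_almostDisjoint_family (α : Type*) [Infinite α] :
    ∃ A : (ℕ → Bool) → Set α, (∀ ξ, (A ξ).Infinite) ∧ Pairwise fun ξ η ↦ (A ξ ∩ A η).Finite := by
  obtain ⟨e⟩ : Nonempty (List Bool ↪ α) :=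
    ⟨(Encodable.encode' (List Bool)).trans (Infinite.natEmbedding α)⟩
  refine ⟨fun ξ ↦ e '' branch ξ, fun ξ ↦ (branch_infinite ξ).image e.injective.injOn,
    fun ξ η h ↦ ?_⟩
  simpa only [← image_inter e.injective] using (branch_inter_branch_finite h).image e

end InfiniteSets

section Product

variable {ι W : Type*} [TopologicalSpace ι] [DiscreteTopology ι] [TopologicalSpace W]
  {H : Subgroup (ι × W ≃ₜ ι × W)} {S T C E E' : Set ι}

/-- The homeomorphisms of `ι × W` which fix every point of `{i} × W` for all `i ∉ S`. -/
abbrev supportedOver (S : Set ι) : Subgroup (ι × W ≃ₜ ι × W) :=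
  supportedIn (Prod.fst ⁻¹' S)

/-- The homeomorphism of `ι × W` which permutes the copies of `W` by `σ`. -/
def permHomeo (W : Type*) [TopologicalSpace W] (σ : Equiv.Perm ι) : ι × W ≃ₜ ι × W :=
  σ.toHomeomorphOfDiscrete.prodCongr (Homeomorph.refl W)

theorem permHomeo_mem_supportedOver {σ : Equiv.Perm ι} (hσ : ∀ i ∉ S, σ i = i) :
    permHomeo W σ ∈ supportedOver S :=
  fun x hx ↦ Prod.ext (hσ x.1 hx) rfl

theorem supportedOver_preimage_le {σ : Equiv.Perm ι} (hσ : permHomeo W σ ∈ H)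
    (hS : supportedOver S ≤ H) : supportedOver (σ ⁻¹' S) ≤ H :=
  supportedIn_preimage_le hS hσ

theorem SmallIndex.exists_infinite_supportedOver_le [Infinite ι] [Countable ι]
    (hH : SmallIndex H) : ∃ S : Set ι, S.Infinite ∧ Sᶜ.Infinite ∧ supportedOver S ≤ H := by
  obtain ⟨e⟩ : Nonempty (ι ≃ ℕ × ℕ × ℕ) := nonempty_equiv_of_countable
  have isLocallyConstant_fst (q : ι → ℕ) : IsLocallyConstant fun x : ι × W ↦ q x.1 :=
    (IsLocallyConstant.of_discrete q).comp_continuous continuous_fst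
  obtain ⟨j, m, hcomm⟩ := hH.exists_commutator_mem (isLocallyConstant_fst fun i ↦ (e i).2.1)
    (isLocallyConstant_fst fun i ↦ (e i).2.2)
  have hjm : {i | (e i).2.1 = j ∧ (e i).2.2 = m}.Infinite :=
    infinite_of_injective_forall_mem (f := fun r : ℕ ↦ e.symm (r, j, m))
      (fun r r' h ↦ by simpa using h) fun r ↦ by simp
  obtain ⟨σ, lev, hfix, hlev, hlev₀, hinf, hinf'⟩ := exists_shift_of_infinite hjm
  refine ⟨lev ⁻¹' {1}, hinf, hinf', fun g hg ↦ ?_⟩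
  obtain ⟨a, ha, rfl⟩ := exists_eq_commutator_of_shift (s := permHomeo W σ)
    (isLocallyConstant_fst lev) (fun x ↦ hlev x.1) (fun x ↦ hlev₀ x.1) hg
  refine hcomm a (fun x hx ↦ ha x ?_) _ (permHomeo_mem_supportedOver fun i hi ↦ (hfix i hi).1)
  simpa using (hfix x.1 hx).2

theorem supportedOver_union_sdiff_le [Countable ι] (hS : supportedOver S ≤ H)
    (hT : supportedOver T ≤ H) (hST : (S ∩ T).Infinite) (hTS : (T \ S).Infinite) (hCT : C ⊆ T)
    (hC : C.Infinite) (hTC : (T \ C).Infinite) : supportedOver ((S ∪ T) \ C) ≤ H := by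
  obtain ⟨σ, hσT, hσC⟩ := exists_perm_preimage_eq hC hTS hCT sdiff_subset hTC
    (by rwa [sdiff_sdiff_right_self, inter_comm])
  have hpre : σ ⁻¹' S = (S ∪ T) \ C := by
    ext i
    by_cases hi : i ∈ T
    · have hσi : σ i ∈ T := by_contra fun h ↦ h (by rwa [σ.injective (hσT _ h)])
      have hmem : (σ i ∈ T \ S) ↔ i ∈ C := Set.ext_iff.1 hσC i
      simpa [hi, hσi] using not_congr hmem
    · simpa [hi, hσT i hi] using fun _ h ↦ hi (hCT h)
  rw [← hpre]
  exact supportedOver_preimage_le (hT (permHomeo_mem_supportedOver hσT)) hS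

theorem finite_setOf_fst_apply [CompactSpace W] (g : ι × W ≃ₜ ι × W) (i : ι) :
    {k | ∃ w, (g (i, w)).1 = k}.Finite :=
  (isCompact_range (by fun_prop : Continuous fun w ↦ (g (i, w)).1)).finite_of_discrete

/-- Some involution `v` moves `g '' (C × W)` onto `E × W` and some permutation `γ` of `T` moves `C`
onto `E`. Both are in `H`, and so is `γ⁻¹ * v * g`, since it fixes `C × W` pointwise. The role of
`E'` is to leave room: `v` is supported off `E' × W`. -/
theorem mem_of_forall_apply_notMem [Countable ι] (hS : supportedOver S ≤ H)
    (hT : supportedOver T ≤ H) (hTS : (T \ S).Infinite) (hCTS : C ⊆ T \ S) (hC : C.Infinite)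
    (hEST : E ⊆ S ∩ T) (hE : E.Infinite) (hE'ST : E' ⊆ S ∩ T) (hE' : E'.Infinite)
    (hEE' : Disjoint E E') {g : ι × W ≃ₜ ι × W} (hg : g ∈ supportedOver (S ∪ T))
    (hgC : ∀ x, x.1 ∈ C → (g x).1 ∉ E ∪ E') : g ∈ H := by
  have hST : (S ∩ T).Infinite := hE.mono hEST
  have hCT : C ⊆ T := hCTS.trans sdiff_subset
  have hET : E ⊆ T := hEST.trans inter_subset_right
  have hTC : (T \ C).Infinite := hST.mono fun i hi ↦ ⟨hi.2, fun h ↦ (hCTS h).2 hi.1⟩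
  have hTE : (T \ E).Infinite := hTS.mono (sdiff_subset_sdiff_right (hEST.trans inter_subset_left))
  obtain ⟨σ, hσT, hσ⟩ := exists_perm_preimage_eq hC hE hCT hET hTC hTE
  let γ := permHomeo W σ
  have hγT : γ ∈ supportedOver T := permHomeo_mem_supportedOver hσT
  have hCW : IsClopen (Prod.fst ⁻¹' C : Set (ι × W)) :=
    (isClopen_discrete C).preimage continuous_fst
  have hγC : γ '' (Prod.fst ⁻¹' C) = Prod.fst ⁻¹' E := by
    rw [← hσ]
    exact image_preimage_eq (Prod.fst ⁻¹' E) γ.surjective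
  have hgCW : g '' (Prod.fst ⁻¹' C) ⊆ Prod.fst ⁻¹' ((S ∪ T) \ (E ∪ E')) := by
    rintro _ ⟨x, hx, rfl⟩
    exact ⟨(apply_mem_iff_of_mem_supportedIn hg).2 (.inr (hCT hx)), hgC x hx⟩
  obtain ⟨v, hv, hvg⟩ := exists_mem_supportedIn_forall_apply_eq (f := g) (g := γ) hCW <| by
    rw [hγC, disjoint_left]
    exact fun x hx hxE ↦ (hgCW hx).2 (.inl hxE)
  have hvST : v ∈ supportedOver ((S ∪ T) \ E') := by
    refine supportedIn_mono (union_subset ?_ ?_) hv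
    · exact hgCW.trans (preimage_mono (sdiff_subset_sdiff_right subset_union_right))
    · rw [hγC]
      exact fun x hx ↦ ⟨.inr (hET hx), hEE'.notMem_of_mem_left hx⟩
  have hvH : v ∈ H := supportedOver_union_sdiff_le hS hT hST hTS
    (hE'ST.trans inter_subset_right) hE'
    (hTS.mono (sdiff_subset_sdiff_right (hE'ST.trans inter_subset_left))) hvST
  have hγvg : γ⁻¹ * v * g ∈ supportedOver ((S ∪ T) \ C) := fun x hx ↦ by
    by_cases hxC : x.1 ∈ C
    · simp [hvg x hxC]
    · have hxST : x ∉ (Prod.fst ⁻¹' (S ∪ T) : Set (ι × W)) := fun h ↦ hx ⟨h, hxC⟩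
      simp [hg x hxST, hvST x fun h ↦ hxST h.1, γ.symm_apply_eq, hγT x fun h ↦ hxST (.inr h)]
  refine (H.mul_mem_cancel_left (H.mul_mem (H.inv_mem (hT hγT)) hvH)).1 ?_
  exact supportedOver_union_sdiff_le hS hT hST hTS hCT hC hTC hγvg

/-- By compactness of `W`, each `g '' ({c} × W)` meets only finitely many copies of `W`, so `g`
moves infinitely many copies off infinitely many others. -/
theorem supportedOver_union_le [Countable ι] [CompactSpace W] (hS : supportedOver S ≤ H)
    (hT : supportedOver T ≤ H) (hST : (S ∩ T).Infinite) (hTS : (T \ S).Infinite) :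
    supportedOver (S ∪ T) ≤ H := by
  intro g hg
  obtain ⟨C, hCTS, D, hDST, hC, hD, hCD⟩ :=
    exists_infinite_subsets_forall_not_rel (r := fun c d ↦ ∃ w, (g (c, w)).1 = d) hTS hST
      (finite_setOf_fst_apply g) fun d ↦ by
        refine (finite_setOf_fst_apply g.symm d).subset ?_
        rintro c ⟨w, rfl⟩
        exact ⟨(g (c, w)).2, by simp⟩
  obtain ⟨E, E', hE, hE', hEE', rfl⟩ := exists_infinite_disjoint_union_eq hD
  rw [union_subset_iff] at hDST
  exact mem_of_forall_apply_notMem hS hT hTS hCTS hC hDST.1 hE hDST.2 hE' hEE' hg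
    fun x hx hgx ↦ hCD _ hx _ hgx ⟨x.2, rfl⟩

theorem SmallIndex.exists_finite_compl_supportedOver_le [Infinite ι] [Countable ι] [CompactSpace W]
    (hH : SmallIndex H) : ∃ Z : Set ι, Zᶜ.Finite ∧ supportedOver Z ≤ H := by
  obtain ⟨S, hS, hSc, hSH⟩ := hH.exists_infinite_supportedOver_le
  obtain ⟨A, hA, hAA⟩ := exists_almostDisjoint_family ι
  have hA_diff {ξ η} (h : ξ ≠ η) : (A ξ \ A η).Infinite := by
    rw [← sdiff_inter_self_eq_sdiff]
    exact (hA ξ).sdiff (hAA h.symm)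
  have hAAc (ξ η) : (A ξ ∪ A η)ᶜ.Infinite := by
    obtain ⟨ζ, hζ⟩ := (toFinite {ξ, η}).infinite_compl.nonempty
    rw [mem_compl_iff, mem_insert_iff, mem_singleton_iff, not_or] at hζ
    refine ((hA ζ).sdiff ((hAA hζ.1).union (hAA hζ.2))).mono ?_
    rw [← inter_union_distrib_left]
    exact fun i hi h ↦ hi.2 ⟨hi.1, h⟩
  have hAc (ξ) : (A ξ)ᶜ.Infinite := by simpa using hAAc ξ ξ
  have hperm (ξ) : ∃ σ : Equiv.Perm ι, σ ⁻¹' (A ξ)ᶜ = S := by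
    obtain ⟨σ, -, hσ⟩ := exists_perm_preimage_eq hS (hAc ξ) (subset_univ _) (subset_univ _)
      (by rwa [← compl_eq_univ_sdiff]) (by rw [← compl_eq_univ_sdiff, compl_compl]; exact hA ξ)
    exact ⟨σ, hσ⟩
  choose σ hσ using hperm
  obtain ⟨ξ, η, hne, hmem⟩ := hH fun ξ ↦ permHomeo W (σ ξ)
  have hT : supportedOver (σ η ⁻¹' (A ξ)ᶜ) ≤ H := by
    have hpre : ⇑((permHomeo W (σ ξ))⁻¹ * permHomeo W (σ η)) ⁻¹' (Prod.fst ⁻¹' S) =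
        Prod.fst ⁻¹' (σ η ⁻¹' (A ξ)ᶜ) := by
      rw [← hσ ξ]
      ext x
      change (permHomeo W (σ ξ) ((permHomeo W (σ ξ)).symm (permHomeo W (σ η) x))).1 ∈ (A ξ)ᶜ ↔
        σ η x.1 ∈ (A ξ)ᶜ
      rw [Homeomorph.apply_symm_apply]
      rfl
    rw [supportedOver, ← hpre]
    exact supportedIn_preimage_le hSH hmem
  rw [← hσ η] at hSH
  refine ⟨σ η ⁻¹' (A η)ᶜ ∪ σ η ⁻¹' (A ξ)ᶜ, ?_, supportedOver_union_le hSH hT ?_ ?_⟩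
  · rw [← preimage_union, ← compl_inter, ← preimage_compl, compl_compl]
    exact (hAA hne.symm).preimage (σ η).injective.injOn
  · rw [← preimage_inter, ← compl_union]
    exact (hAAc η ξ).preimage fun i _ ↦ (σ η).surjective i
  · rw [← preimage_sdiff, compl_sdiff_compl]
    exact (hA_diff hne.symm).preimage fun i _ ↦ (σ η).surjective i

end Product

section IsOpenOn

variable {W Y κ : Type*} [TopologicalSpace W] [TopologicalSpace Y] {H : Subgroup (Y ≃ₜ Y)}
  {U V : Set Y}

/-- `H` contains all homeomorphisms supported in `U` which stabilize finitely many suitable compact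
open sets. In other words `H ⊓ supportedIn U` is open in `supportedIn U` for the topology in which
the pointwise stabilizers of finitely many compact open sets are a neighbourhood basis of `1`. -/
def IsOpenOn (H : Subgroup (Y ≃ₜ Y)) (U : Set Y) : Prop :=
  ∃ A : Finset (Set Y), (∀ B ∈ A, IsCompact B ∧ IsOpen B) ∧
    ∀ g ∈ supportedIn U, (∀ B ∈ A, g '' B = B) → g ∈ H

/-- The small index property of the homeomorphism group of `Y`, with compact open sets in place of
clopen sets; the two notions of set agree if `Y` is compact Hausdorff, but only the former is
preserved by open embeddings. -/
def HasSmallIndexProperty (Y : Type*) [TopologicalSpace Y] : Prop :=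
  ∀ H : Subgroup (Y ≃ₜ Y), SmallIndex H → IsOpenOn H univ

theorem HasSmallIndexProperty.of_subsingleton [Subsingleton Y] : HasSmallIndexProperty Y :=
  fun H _ ↦ ⟨∅, by simp, fun g _ _ ↦ by
    rw [show g = 1 from Homeomorph.ext fun _ ↦ Subsingleton.elim _ _]
    exact H.one_mem⟩

theorem isOpenOn_of_supportedIn_le (h : supportedIn U ≤ H) : IsOpenOn H U :=
  ⟨∅, by simp, fun _ hg _ ↦ h hg⟩

theorem IsOpenOn.union (hU : IsOpenOn H U) (hU_clopen : IsClopen U) (hU_compact : IsCompact U)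
    (hV : IsOpenOn H V) : IsOpenOn H (U ∪ V) := by
  classical
  obtain ⟨A, hA, hAH⟩ := hU
  obtain ⟨A', hA', hAH'⟩ := hV
  refine ⟨insert U (A ∪ A'), ?_, fun g hg hgA ↦ ?_⟩
  · simp only [Finset.forall_mem_insert, Finset.mem_union]
    exact ⟨⟨hU_compact, hU_clopen.isOpen⟩, fun B hB ↦ hB.elim (hA B) (hA' B)⟩
  simp only [Finset.forall_mem_insert, Finset.mem_union] at hgA
  obtain ⟨k, hk, hkg⟩ := exists_mem_supportedIn_eqOn_of_image_eq hU_clopen hgA.1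
  have hkA {B} (hB : B ∈ A ∨ B ∈ A') : k '' B = B := by
    have hgB : g '' (B ∩ U) = B ∩ U := by rw [image_inter g.injective, hgA.2 B hB, hgA.1]
    have hkU : k '' (B ∩ U) = B ∩ U := (hkg.mono inter_subset_right).image_eq.trans hgB
    have hkU' : k '' (B \ U) = B \ U := by
      rw [EqOn.image_eq (f₂ := id) fun x hx ↦ hk x hx.2, image_id]
    rw [← inter_union_sdiff B U, image_union, hkU, hkU']
  have hkH : k ∈ H := hAH k hk fun B hB ↦ hkA (.inl hB)
  refine (H.mul_mem_cancel_left (H.inv_mem hkH)).1 (hAH' _ (fun x hx ↦ ?_) fun B hB ↦ ?_)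
  · by_cases hxU : x ∈ U
    · simp [← hkg hxU]
    · have hgx : g x = x := hg x fun h ↦ h.elim hxU hx
      simp [hgx, k.symm_apply_eq, hk x hxU]
  · calc ⇑(k⁻¹ * g) '' B = k.symm '' (g '' B) := image_comp k.symm g B
      _ = k.symm '' (k '' B) := by rw [hgA.2 B (.inr hB), hkA (.inr hB)]
      _ = B := k.symm_image_image B

theorem IsOpenOn.finite_biUnion_union {F : Set κ} (hF : F.Finite) {U : κ → Set Y}
    (hU : ∀ i ∈ F, IsOpenOn H (U i)) (hU_clopen : ∀ i ∈ F, IsClopen (U i))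
    (hU_compact : ∀ i ∈ F, IsCompact (U i)) (hV : IsOpenOn H V) :
    IsOpenOn H ((⋃ i ∈ F, U i) ∪ V) := by
  induction F, hF using Set.Finite.induction_on with
  | empty => simpa using hV
  | insert _ _ ih =>
    simp only [forall_mem_insert] at hU hU_clopen hU_compact
    rw [biUnion_insert, union_assoc]
    exact hU.1.union hU_clopen.1 hU_compact.1 (ih hU.2 hU_clopen.2 hU_compact.2)

theorem exists_homeomorph_apply_eq {e : W → Y} (he : IsEmbedding e) {g : Y ≃ₜ Y}
    (hg : g ∈ supportedIn (range e)) : ∃ f : W ≃ₜ W, ∀ w, e (f w) = g (e w) := by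
  let e' := he.toHomeomorph
  let g' : range e ≃ₜ range e := g.subtype fun _ ↦ (apply_mem_iff_of_mem_supportedIn hg).symm
  refine ⟨(e'.trans g').trans e'.symm, fun w ↦ ?_⟩
  exact congrArg Subtype.val (e'.apply_symm_apply (g' (e' w)))

theorem HasSmallIndexProperty.isOpenOn_range (hW : HasSmallIndexProperty W) (hH : SmallIndex H)
    {e : W → Y} (he : IsOpenEmbedding e) (φ : (W ≃ₜ W) →* (Y ≃ₜ Y))
    (hφ : ∀ f w, φ f (e w) = e (f w)) (hφ' : ∀ f, φ f ∈ supportedIn (range e)) :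
    IsOpenOn H (range e) := by
  classical
  obtain ⟨A, hA, hAH⟩ := hW _ (hH.comap φ)
  refine ⟨A.image (e '' ·), ?_, fun g hg hgA ↦ ?_⟩
  · simp only [Finset.forall_mem_image]
    exact fun B hB ↦ ⟨(hA B hB).1.image he.continuous, he.isOpenMap B (hA B hB).2⟩
  obtain ⟨f, hf⟩ := exists_homeomorph_apply_eq he.isEmbedding hg
  have hfg : φ f = g := by
    ext x
    by_cases hx : x ∈ range e
    · obtain ⟨w, rfl⟩ := hx
      rw [hφ, hf]
    · rw [hφ' f x hx, hg x hx]
  rw [← hfg]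
  refine hAH f (mem_supportedIn_univ f) fun B hB ↦ he.injective.image_injective ?_
  have hgB : g '' (e '' B) = e '' B := by simpa using Finset.forall_mem_image.1 hgA hB
  rw [← hgB, image_image, image_image]
  simp only [hf]

theorem HasSmallIndexProperty.of_homeomorph (hW : HasSmallIndexProperty W) (e : W ≃ₜ Y) :
    HasSmallIndexProperty Y := fun H hH ↦ by
  rw [← e.range_coe]
  exact hW.isOpenOn_range hH e.isOpenEmbedding
    { toFun f := (e.symm.trans f).trans e
      map_one' := by ext; simp
      map_mul' _ _ := by ext; simp }
    (fun f w ↦ by simp) fun f x hx ↦ (hx (e.surjective x)).elim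

theorem HasSmallIndexProperty.onePoint (hY : HasSmallIndexProperty Y)
    (hfix : ∀ g : OnePoint Y ≃ₜ OnePoint Y, g OnePoint.infty = OnePoint.infty) :
    HasSmallIndexProperty (OnePoint Y) := fun H hH ↦ by
  have mem_supportedIn_range (g : OnePoint Y ≃ₜ OnePoint Y) :
      g ∈ supportedIn (range ((↑) : Y → OnePoint Y)) := fun x hx ↦ by
    rw [OnePoint.notMem_range_coe_iff.1 hx, hfix]
  obtain ⟨A, hA, hAH⟩ := hY.isOpenOn_range hH OnePoint.isOpenEmbedding_coe
    { toFun f := f.onePointCongr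
      map_one' := by ext x; induction x using OnePoint.rec <;> rfl
      map_mul' f f' := by ext x; induction x using OnePoint.rec <;> rfl }
    (fun f w ↦ rfl) fun f ↦ mem_supportedIn_range _
  exact ⟨A, hA, fun g _ ↦ hAH g (mem_supportedIn_range g)⟩

/-- The action on `ι × W` of a family of homeomorphisms of `W`, one for each copy of `W`. -/
def fiberwise (ι W : Type*) [TopologicalSpace ι] [DiscreteTopology ι] [TopologicalSpace W] :
    (ι → (W ≃ₜ W)) →* (ι × W ≃ₜ ι × W) where
  toFun f :=
    { toFun x := (x.1, f x.1 x.2)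
      invFun x := (x.1, (f x.1).symm x.2)
      left_inv x := by simp
      right_inv x := by simp
      continuous_toFun := continuous_prod_of_discrete_left.2 fun i ↦
        continuous_const.prodMk (f i).continuous
      continuous_invFun := continuous_prod_of_discrete_left.2 fun i ↦
        continuous_const.prodMk (f i).symm.continuous }
  map_one' := rfl
  map_mul' _ _ := rfl

theorem fiberwise_apply {ι : Type*} [TopologicalSpace ι] [DiscreteTopology ι]
    (f : ι → (W ≃ₜ W)) (x : ι × W) : fiberwise ι W f x = (x.1, f x.1 x.2) := rfl

theorem isOpenEmbedding_prodMk_left {ι : Type*} [TopologicalSpace ι] [DiscreteTopology ι] (i : ι) :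
    IsOpenEmbedding (fun w : W ↦ (i, w)) :=
  .of_continuous_injective_isOpenMap (by fun_prop) (Prod.mk_right_injective i) fun U hU ↦ by
    rw [← singleton_prod]
    exact (isOpen_discrete {i}).prod hU

theorem HasSmallIndexProperty.prod {ι : Type*} [TopologicalSpace ι] [DiscreteTopology ι]
    [Infinite ι] [Countable ι] [CompactSpace W] (hW : HasSmallIndexProperty W) :
    HasSmallIndexProperty (ι × W) := fun H hH ↦ by
  classical
  obtain ⟨Z, hZ, hZH⟩ := hH.exists_finite_compl_supportedOver_le
  have hfiber (i : ι) : Prod.fst ⁻¹' {i} = range (fun w : W ↦ (i, w)) := by ext; aesop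
  have hopen (i : ι) : IsOpenOn H (Prod.fst ⁻¹' {i}) := by
    rw [hfiber]
    refine hW.isOpenOn_range hH (isOpenEmbedding_prodMk_left i)
      ((fiberwise ι W).comp (.mulSingle (fun _ ↦ W ≃ₜ W) i))
      (fun f w ↦ ?_) fun f x hx ↦ ?_
    · simp [fiberwise_apply]
    · have hxi : x.1 ≠ i := by rwa [← hfiber] at hx
      simp [fiberwise_apply, hxi]
  have hcover : (⋃ i ∈ Zᶜ, Prod.fst ⁻¹' {i}) ∪ Prod.fst ⁻¹' Z = (univ : Set (ι × W)) := by
    ext; simp [em']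
  rw [← hcover]
  refine .finite_biUnion_union hZ (fun i _ ↦ hopen i)
    (fun i _ ↦ (isClopen_discrete {i}).preimage continuous_fst) (fun i _ ↦ ?_)
    (isOpenOn_of_supportedIn_le hZH)
  rw [hfiber]
  exact isCompact_range (by fun_prop)

end IsOpenOn

section IteratedDerivedSet

variable {W X Y : Type*} [TopologicalSpace W] [TopologicalSpace X] [TopologicalSpace Y]

theorem preimage_derivedSet {e : X → Y} (he : IsOpenEmbedding e) (A : Set Y) :
    e ⁻¹' derivedSet A = derivedSet (e ⁻¹' A) := by
  ext x
  rw [mem_preimage, mem_derivedSet, mem_derivedSet, ← he.accPt_comap_iff, Filter.comap_principal]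

theorem preimage_iterate_derivedSet {e : X → Y} (he : IsOpenEmbedding e) (n : ℕ) :
    e ⁻¹' derivedSet^[n] univ = derivedSet^[n] univ := by
  induction n with
  | zero => rfl
  | succ n ih => rw [Function.iterate_succ_apply', Function.iterate_succ_apply',
      preimage_derivedSet he, ih]

theorem apply_eq_of_iterate_derivedSet_eq_singleton {n : ℕ} {p : X}
    (hp : derivedSet^[n] univ = {p}) (g : X ≃ₜ X) : g p = p := by
  have hgp : p ∈ g ⁻¹' derivedSet^[n] univ := by
    rw [preimage_iterate_derivedSet g.isOpenEmbedding, hp, mem_singleton_iff]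
  rwa [hp] at hgp

theorem derivedSet_singleton [T1Space X] (x : X) : derivedSet {x} = ∅ :=
  eq_empty_of_forall_notMem fun _ hy ↦ Infinite.of_accPt hy (finite_singleton x)

theorem iterate_derivedSet_onePoint_prod {ι : Type*} [TopologicalSpace ι] [DiscreteTopology ι]
    [Infinite ι] [T1Space W] {n : ℕ} {w : W} (hw : derivedSet^[n] univ = {w}) :
    derivedSet^[n + 1] univ = {(OnePoint.infty : OnePoint (ι × W))} := by
  have he (i : ι) : IsOpenEmbedding fun w : W ↦ ((i, w) : OnePoint (ι × W)) :=
    OnePoint.isOpenEmbedding_coe.comp (isOpenEmbedding_prodMk_left i)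
  have hsub : derivedSet^[n + 1] univ ⊆ {(OnePoint.infty : OnePoint (ι × W))} := by
    intro x hx
    by_contra hx_ne
    obtain ⟨⟨i, v⟩, rfl⟩ := OnePoint.ne_infty_iff_exists.1 hx_ne
    have hv : v ∈ derivedSet^[n + 1] univ := by rwa [← preimage_iterate_derivedSet (he i)]
    rwa [Function.iterate_succ_apply', hw, derivedSet_singleton] at hv
  have hinf : (derivedSet^[n] (univ : Set (OnePoint (ι × W)))).Infinite := by
    refine infinite_of_injective_forall_mem (f := fun i : ι ↦ ((i, w) : OnePoint (ι × W)))
      (fun i j hij ↦ congrArg Prod.fst (OnePoint.coe_injective hij)) fun i ↦ ?_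
    rw [← mem_preimage (f := fun w : W ↦ ((i, w) : OnePoint (ι × W))),
      preimage_iterate_derivedSet (he i), hw, mem_singleton_iff]
  obtain ⟨x, hx⟩ := hinf.exists_accPt_principal
  refine hsub.antisymm (singleton_subset_iff.2 ?_)
  rw [Function.iterate_succ_apply'] at hsub ⊢
  rwa [← hsub hx]

end IteratedDerivedSet

section Ordinal

variable {δ : Ordinal} {i j : ℕ}

theorem mul_natCast_add_le_mul_natCast (hij : i < j) (β : OrdIcc δ) : δ * i + β ≤ δ * j := by
  calc δ * i + β ≤ δ * i + δ := by gcongr; exact β.2.2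
    _ = δ * (i + 1 : ℕ) := by rw [Nat.cast_add_one, mul_add_one]
    _ ≤ δ * j := by gcongr; exact_mod_cast hij

theorem mul_natCast_add_lt_mul_natCast_add (hij : i < j) (β β' : OrdIcc δ) :
    δ * i + β < δ * j + β' :=
  (mul_natCast_add_le_mul_natCast hij β).trans_lt <|
    lt_add_of_pos_right _ (Order.one_le_iff_pos.1 β'.2.1)

theorem mul_natCast_add_lt_mul_omega0 (i : ℕ) (β : OrdIcc δ) : δ * i + β < δ * ω :=
  (mul_natCast_add_le_mul_natCast i.lt_succ_self β).trans_lt <|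
    (mul_lt_mul_iff_right₀ (Order.one_le_iff_pos.1 (β.2.1.trans β.2.2))).2 (natCast_lt_omega0 _)

theorem exists_mul_natCast_add_eq {γ : Ordinal} (hγ : 1 ≤ γ) (hγδ : γ < δ * ω) :
    ∃ (i : ℕ) (β : OrdIcc δ), δ * i + β = γ := by
  obtain ⟨c, hc, hγc⟩ := (lt_mul_iff_of_isSuccLimit isSuccLimit_omega0).1 hγδ
  obtain ⟨k, rfl⟩ := lt_omega0.1 hc
  clear hc hγδ
  replace hγc := hγc.le
  induction k with
  | zero => simp [(Order.one_le_iff_pos.1 hγ).ne'] at hγc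
  | succ k ih =>
    obtain hγk | hkγ := le_or_gt γ (δ * k)
    · exact ih hγk
    · refine ⟨k, ⟨γ - δ * k, Order.one_le_iff_pos.2 (lt_sub.2 (by simpa using hkγ)), sub_le.2 ?_⟩,
        Ordinal.add_sub_cancel_of_le hkγ.le⟩
      rwa [← mul_add_one, ← Nat.cast_add_one]

/-- The map from the disjoint union of `ℕ` copies of `[1, δ]` to `[1, δ * ω]` which lays the copies
end to end, so that the `i`-th one becomes the interval `[δ * i + 1, δ * (i + 1)]`. -/
def layCopies (δ : Ordinal) (x : ℕ × OrdIcc δ) : OrdIcc (δ * ω) :=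
  ⟨δ * x.1 + x.2, x.2.2.1.trans le_add_self, (mul_natCast_add_lt_mul_omega0 x.1 x.2).le⟩

theorem layCopies_injective : Injective (layCopies δ) := by
  rintro ⟨i, β⟩ ⟨j, β'⟩ h
  have hij : δ * i + β = δ * j + β' := congrArg Subtype.val h
  obtain rfl : i = j := by
    by_contra hne
    obtain hlt | hlt := lt_or_gt_of_ne hne
    · exact (mul_natCast_add_lt_mul_natCast_add hlt β β').ne hij
    · exact (mul_natCast_add_lt_mul_natCast_add hlt β' β).ne' hij
  rw [Subtype.ext (add_left_cancel hij)]

theorem continuous_layCopies : Continuous (layCopies δ) :=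
  continuous_prod_of_discrete_left.2 fun i ↦ Continuous.subtype_mk
    ((isNormal_add_right (δ * i)).continuous.comp continuous_subtype_val) _

theorem tendsto_mul_natCast_atTop (hδ : 0 < δ) :
    Filter.Tendsto (fun i : ℕ ↦ δ * i) Filter.atTop (𝓝 (δ * ω)) := by
  refine tendsto_order.2 ⟨fun a ha ↦ ?_, fun a ha ↦ .of_forall fun i ↦ ?_⟩
  · obtain ⟨c, hc, hac⟩ := (lt_mul_iff_of_isSuccLimit isSuccLimit_omega0).1 ha
    obtain ⟨k, rfl⟩ := lt_omega0.1 hc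
    filter_upwards [Filter.eventually_ge_atTop k] with i hi
    exact hac.trans_le (by gcongr)
  · exact ((mul_lt_mul_iff_right₀ hδ).2 (natCast_lt_omega0 i)).trans ha

theorem tendsto_layCopies (hδ : 1 ≤ δ * ω) :
    Filter.Tendsto (layCopies δ) (Filter.cocompact _) (𝓝 ⟨δ * ω, hδ, le_rfl⟩) := by
  have hδ' : 0 < δ := by
    by_contra! h
    simp [nonpos_iff_eq_zero.1 h] at hδ
  have hfst : Filter.Tendsto Prod.fst (Filter.cocompact (ℕ × OrdIcc δ)) Filter.atTop := by
    rw [← Filter.coprod_cocompact, Filter.cocompact_eq_bot (X := OrdIcc δ), Filter.coprod,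
      Filter.comap_bot, sup_bot_eq, Filter.cocompact_eq_cofinite, Nat.cofinite_eq_atTop]
    exact Filter.tendsto_comap
  refine tendsto_subtype_rng.2 (tendsto_of_tendsto_of_tendsto_of_le_of_le
    ((tendsto_mul_natCast_atTop hδ').comp hfst) tendsto_const_nhds (fun x ↦ ?_) fun x ↦ ?_)
  · exact le_self_add
  · exact (layCopies δ x).2.2

theorem nonempty_onePoint_homeomorph (hδ : 1 ≤ δ * ω) :
    Nonempty (OnePoint (ℕ × OrdIcc δ) ≃ₜ OrdIcc (δ * ω)) := by
  let f (x : OnePoint (ℕ × OrdIcc δ)) : OrdIcc (δ * ω) := x.elim ⟨δ * ω, hδ, le_rfl⟩ (layCopies δ)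
  have hf_cont : Continuous f := by
    rw [OnePoint.continuous_iff, Filter.coclosedCompact_eq_cocompact]
    exact ⟨tendsto_layCopies hδ, continuous_layCopies⟩
  have hlt (x) : layCopies δ x < ⟨δ * ω, hδ, le_rfl⟩ := mul_natCast_add_lt_mul_omega0 x.1 x.2
  have hf : Bijective f := by
    refine ⟨fun x y hxy ↦ ?_, fun γ ↦ ?_⟩
    · induction x using OnePoint.rec <;> induction y using OnePoint.rec
      · rfl
      · exact ((hlt _).ne' hxy).elim
      · exact ((hlt _).ne hxy).elim
      · exact congrArg _ (layCopies_injective hxy)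
    · obtain hγ | hγ := γ.2.2.eq_or_lt
      · exact ⟨OnePoint.infty, Subtype.ext hγ.symm⟩
      · obtain ⟨i, β, hβ⟩ := exists_mul_natCast_add_eq γ.2.1 hγ
        exact ⟨((i, β) : ℕ × OrdIcc δ), Subtype.ext hβ⟩
  exact ⟨Continuous.homeoOfEquivCompactToT2 (f := .ofBijective f hf) hf_cont⟩

theorem HasSmallIndexProperty.ordIcc_mul_omega0 (h : HasSmallIndexProperty (OrdIcc δ)) {n : ℕ}
    {p : OrdIcc δ} (hp : derivedSet^[n] univ = {p}) :
    HasSmallIndexProperty (OrdIcc (δ * ω)) ∧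
      ∃ q : OrdIcc (δ * ω), derivedSet^[n + 1] univ = {q} := by
  obtain ⟨e⟩ := nonempty_onePoint_homeomorph (δ := δ) <| calc
    1 ≤ δ := p.2.1.trans p.2.2
    _ ≤ δ * ω := le_mul_left δ omega0_pos
  have hinfty := iterate_derivedSet_onePoint_prod (ι := ℕ) hp
  refine ⟨(h.prod.onePoint (apply_eq_of_iterate_derivedSet_eq_singleton hinfty)).of_homeomorph e,
    e OnePoint.infty, ?_⟩
  rw [← preimage_iterate_derivedSet e.symm.isOpenEmbedding, hinfty]
  ext
  simp [e.symm_apply_eq]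

theorem hasSmallIndexProperty_ordIcc_omega0_opow.{u} (n : ℕ) :
    HasSmallIndexProperty (OrdIcc.{u} (ω ^ (n : Ordinal))) ∧
      ∃ p : OrdIcc.{u} (ω ^ (n : Ordinal)), derivedSet^[n] univ = {p} := by
  induction n with
  | zero =>
    rw [Nat.cast_zero, opow_zero]
    have : Subsingleton (OrdIcc.{u} 1) := (subsingleton_coe _).2 (subsingleton_Icc_of_ge le_rfl)
    exact ⟨.of_subsingleton, ⟨1, le_rfl, le_rfl⟩, eq_singleton_iff_unique_mem.2
      ⟨mem_univ _, fun _ _ ↦ Subsingleton.elim _ _⟩⟩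
  | succ n ih =>
    obtain ⟨hn, p, hp⟩ := ih
    rw [Nat.cast_add_one, opow_add, opow_one]
    exact hn.ordIcc_mul_omega0 hp

end Ordinal

/-- For a positive natural number `α`, the group `G` of homeomorphisms of
`X = [1, ω^α]` (order topology) has the small index property: every subgroup `H` of `G`
of index `< 2^ℵ₀` contains the pointwise stabilizer of a finite set of clopen subsets of `X`. -/
theorem smallIndexProperty_homeoGroup_omega_pow (α : ℕ) (hα : 0 < α)
    (H : Subgroup (OrdIcc (omega0 ^ (α : Ordinal)) ≃ₜ OrdIcc (omega0 ^ (α : Ordinal))))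
    (hH : Cardinal.mk ((OrdIcc (omega0 ^ (α : Ordinal)) ≃ₜ OrdIcc (omega0 ^ (α : Ordinal))) ⧸ H)
      < 2 ^ Cardinal.aleph0) :
    ∃ A : Finset (Set (OrdIcc (omega0 ^ (α : Ordinal)))),
      (∀ B ∈ A, IsClopen B) ∧
      ∀ g : OrdIcc (omega0 ^ (α : Ordinal)) ≃ₜ OrdIcc (omega0 ^ (α : Ordinal)),
        (∀ B ∈ A, ⇑g '' B = B) → g ∈ H := by
  obtain ⟨A, hA, hAH⟩ := (hasSmallIndexProperty_ordIcc_omega0_opow α).1 H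
    (smallIndex_iff_mk_quotient_lt.2 hH)
  exact ⟨A, fun B hB ↦ ⟨(hA B hB).1.isClosed, (hA B hB).2⟩,
    fun g hg ↦ hAH g (mem_supportedIn_univ g) hg⟩
end
end

section
/- Let α be a positive natural number (a finite ordinal) and let X = [1, ω^α] be the set of ordinals β with 1 ≤ β ≤ ω^α (ordinal exponentiation), equipped with the order topology, and let G be the group of homeomorphisms of X onto itself. Then G has no proper normal subgroup of index strictly less than 2^ℵ₀: if N is a normal subgroup of G whose index, as a cardinal, is strictly less than 2^ℵ₀, then N = G. -/
open Ordinal Topology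

noncomputable section

/-!
Every homeomorphism of `[1, ω ^ α]` fixes `ω ^ α`, the only point of Cantor–Bendixson rank at least
`α`, so it suffices to treat the open interval `(0, ω ^ α)`. Cut that interval into countably many
compact clopen pieces `p ⁻¹' {n}` of the form `(a, b]`, of lengths eventually above each ordinal
below `ω ^ α`: any clopen set containing infinitely many pieces is then homeomorphic to the whole
interval.

Group the pieces into infinitely many infinite blocks. A subgroup `N` that realizes on no block all
the homeomorphisms supported there has at least `2 ^ ℵ₀` cosets, by independent choices over the
blocks. So if `N` is normal of small index, it realizes all of them on some block. An element
supported on a sub-block is a commutator of an infinite product supported on the block with a shift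
of the block; replacing the product by an element of `N` that agrees with it on the block does not
change the commutator, which thus lies in `N`. Hence `N` contains all homeomorphisms supported on
some moiety, so on any moiety, and every homeomorphism is a product of two supported on moieties.
-/

universe u

section Gluing

variable {W Z I : Type*}

theorem apply_fibre_eq {b : W → I} (e : ∀ i, b ⁻¹' {i} → Z) {i : I} (w : b ⁻¹' {i}) :
    e (b w) ⟨w, rfl⟩ = e i w := by
  obtain ⟨w, rfl⟩ := w
  rfl

variable [TopologicalSpace W] [TopologicalSpace Z] [TopologicalSpace I] [DiscreteTopology I]

theorem continuous_of_continuous_fibres {b : W → I} (hb : Continuous b) {e : ∀ i, b ⁻¹' {i} → Z}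
    (he : ∀ i, Continuous (e i)) : Continuous fun w => e (b w) ⟨w, rfl⟩ := by
  refine continuous_iff_continuousAt.2 fun w => ?_
  have hfibre : b ⁻¹' {b w} ∈ 𝓝 w := ((isOpen_discrete _).preimage hb).mem_nhds rfl
  refine ContinuousOn.continuousAt (continuousOn_iff_continuous_domRestrict.2 ?_) hfibre
  exact (he (b w)).congr fun v => (apply_fibre_eq e v).symm

/-- The homeomorphism acting as `e i` from the clopen fibre of `b` over `i` to that of `b'`. -/
def glueFibres {b : W → I} {b' : Z → I} (hb : Continuous b) (hb' : Continuous b')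
    (e : ∀ i, b ⁻¹' {i} ≃ₜ b' ⁻¹' {i}) : W ≃ₜ Z where
  toFun w := e (b w) ⟨w, rfl⟩
  invFun z := (e (b' z)).symm ⟨z, rfl⟩
  left_inv w := (apply_fibre_eq (fun i z => ((e i).symm z : W)) (e (b w) ⟨w, rfl⟩)).trans
    (congrArg Subtype.val ((e (b w)).symm_apply_apply _))
  right_inv z := (apply_fibre_eq (fun i w => (e i w : Z)) ((e (b' z)).symm ⟨z, rfl⟩)).trans
    (congrArg Subtype.val ((e (b' z)).apply_symm_apply _))
  continuous_toFun := continuous_of_continuous_fibres hb fun i =>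
    continuous_subtype_val.comp (e i).continuous
  continuous_invFun := continuous_of_continuous_fibres hb' fun i =>
    continuous_subtype_val.comp (e i).symm.continuous

theorem glueFibres_apply {b : W → I} {b' : Z → I} (hb : Continuous b) (hb' : Continuous b')
    (e : ∀ i, b ⁻¹' {i} ≃ₜ b' ⁻¹' {i}) {i : I} (w : b ⁻¹' {i}) :
    glueFibres hb hb' e w = e i w :=
  apply_fibre_eq (fun i w => (e i w : Z)) w

theorem exists_homeo_comp_eq {b : W → I} {b' : Z → I} (hb : Continuous b) (hb' : Continuous b')
    (h : ∀ i, Nonempty (b ⁻¹' {i} ≃ₜ b' ⁻¹' {i})) : ∃ φ : W ≃ₜ Z, ∀ w, b' (φ w) = b w :=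
  ⟨glueFibres hb hb' fun i => (h i).some, fun w => ((h (b w)).some ⟨w, rfl⟩).2⟩

theorem exists_homeo_eqOn_eqOn {A B : Set Z} (hA : IsClopen A) (hB : IsClopen B)
    (hAB : Disjoint A B) {u v : W ≃ₜ Z} (huv : Disjoint (u ⁻¹' A) (v ⁻¹' B))
    (e : ↥(u ⁻¹' A ∪ v ⁻¹' B)ᶜ ≃ₜ ↥(A ∪ B)ᶜ) :
    ∃ k : W ≃ₜ Z, Set.EqOn k u (u ⁻¹' A) ∧ Set.EqOn k v (v ⁻¹' B) := by
  classical
  let b (w : W) : Bool × Bool := (u w ∈ A, v w ∈ B)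
  let b' (z : Z) : Bool × Bool := (z ∈ A, z ∈ B)
  have hb' : Continuous b' := ((continuous_boolIndicator_iff_isClopen A).2 hA).prodMk
    ((continuous_boolIndicator_iff_isClopen B).2 hB)
  have hb : Continuous b := (continuous_fst.comp (hb'.comp u.continuous)).prodMk
    (continuous_snd.comp (hb'.comp v.continuous))
  have hcode {P Q : Prop} (h : P → ¬Q) : ((decide P, decide Q) = (true, false) ↔ P) ∧
      ((decide P, decide Q) = (false, true) ↔ Q) ∧ (decide P, decide Q) ≠ (true, true) := by
    by_cases P <;> by_cases Q <;> simp_all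
  have hbW (w : W) := hcode (P := u w ∈ A) (Q := v w ∈ B) (Set.disjoint_left.1 huv ·)
  have hbZ (z : Z) := hcode (P := z ∈ A) (Q := z ∈ B) (Set.disjoint_left.1 hAB ·)
  have hpiece : ∀ i, ∃ e : b ⁻¹' {i} ≃ₜ b' ⁻¹' {i},
      (i = (true, false) → ∀ w, (e w : Z) = u w) ∧ (i = (false, true) → ∀ w, (e w : Z) = v w) := by
    rintro ⟨_ | _, _ | _⟩
    · have hrestW : b ⁻¹' {(false, false)} = (u ⁻¹' A ∪ v ⁻¹' B)ᶜ := by ext w; simp [b]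
      have hrestZ : b' ⁻¹' {(false, false)} = (A ∪ B)ᶜ := by ext z; simp [b']
      rw [hrestW, hrestZ]
      exact ⟨e, by simp, by simp⟩
    · exact ⟨v.subtype fun w => (hbW w).2.1.trans (hbZ _).2.1.symm, by simp, fun _ w => rfl⟩
    · exact ⟨u.subtype fun w => (hbW w).1.trans (hbZ _).1.symm, fun _ w => rfl, by simp⟩
    · have : IsEmpty (b ⁻¹' {(true, true)}) := ⟨fun w => (hbW w).2.2 w.2⟩
      have : IsEmpty (b' ⁻¹' {(true, true)}) := ⟨fun z => (hbZ z).2.2 z.2⟩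
      exact ⟨Homeomorph.empty, by simp, by simp⟩
  choose e' he'u he'v using hpiece
  exact ⟨glueFibres hb hb' e',
    fun w hw => (glueFibres_apply hb hb' e' ⟨w, (hbW w).1.2 hw⟩).trans (he'u _ rfl _),
    fun w hw => (glueFibres_apply hb hb' e' ⟨w, (hbW w).2.1.2 hw⟩).trans (he'v _ rfl _)⟩

/-- The homeomorphism acting as `h i` on the clopen fibre of `b` over `i`. -/
def glueSelf {b : W → I} (hb : Continuous b) (h : I → (W ≃ₜ W)) (hh : ∀ i w, b (h i w) = b w) :
    W ≃ₜ W :=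
  glueFibres hb hb fun i => (h i).subtype fun w => by
    simp only [Set.mem_preimage, hh]

theorem glueSelf_apply {b : W → I} (hb : Continuous b) (h : I → (W ≃ₜ W))
    (hh : ∀ i w, b (h i w) = b w) (w : W) : glueSelf hb h hh w = h (b w) w := rfl

end Gluing

section RigidStabilizers

variable {W : Type*} [TopologicalSpace W]

theorem homeo_mul_apply (f g : W ≃ₜ W) (w : W) : (f * g) w = f (g w) := rfl

theorem homeo_one_apply (w : W) : (1 : W ≃ₜ W) w = w := rfl

theorem homeo_inv_apply (f : W ≃ₜ W) (w : W) : f⁻¹ w = f.symm w := rfl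

/-- The rigid stabilizer of `A`: the homeomorphisms supported on `A`, that is, those fixing every
point outside `A`. -/
def rigidStabilizer (A : Set W) : Subgroup (W ≃ₜ W) where
  carrier := {h | ∀ w ∉ A, h w = w}
  one_mem' _ _ := rfl
  mul_mem' {f g} hf hg w hw := by rw [homeo_mul_apply, hg w hw, hf w hw]
  inv_mem' {f} hf w hw := f.symm_apply_eq.2 (hf w hw).symm

theorem apply_mem_iff_of_mem_rigidStabilizer {A : Set W} {h : W ≃ₜ W}
    (hh : h ∈ rigidStabilizer A) {w : W} : h w ∈ A ↔ w ∈ A := by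
  refine ⟨fun hw => ?_, fun hw => ?_⟩ <;> by_contra hw'
  · exact hw' (by rwa [hh w hw'] at hw)
  · exact hw' (by rwa [h.injective (hh _ hw')])

theorem apply_eq_of_mem_rigidStabilizer_fibre {I : Type*} {b : W → I} {i : I} {h : W ≃ₜ W}
    (hh : h ∈ rigidStabilizer (b ⁻¹' {i})) (w : W) : b (h w) = b w := by
  by_cases hw : b w = i
  · exact ((apply_mem_iff_of_mem_rigidStabilizer hh).2 hw : b (h w) = i).trans hw.symm
  · rw [hh w hw]

theorem commute_of_disjoint_rigidStabilizer {A B : Set W} (hAB : Disjoint A B) {f g : W ≃ₜ W}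
    (hf : f ∈ rigidStabilizer A) (hg : g ∈ rigidStabilizer B) : Commute f g := by
  refine Homeomorph.ext fun w => ?_
  rw [homeo_mul_apply, homeo_mul_apply]
  by_cases hw : w ∈ A
  · rw [hg w (hAB.notMem_of_mem_left hw),
      hg _ (hAB.notMem_of_mem_left ((apply_mem_iff_of_mem_rigidStabilizer hf).2 hw))]
  · rw [hf w hw]
    by_cases hwB : w ∈ B
    · exact hf _ (hAB.notMem_of_mem_right ((apply_mem_iff_of_mem_rigidStabilizer hg).2 hwB))
    · rw [hg w hwB, hf w hw]

theorem conj_mem_rigidStabilizer {A : Set W} {h : W ≃ₜ W} (φ : W ≃ₜ W)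
    (hh : h ∈ rigidStabilizer A) : φ⁻¹ * h * φ ∈ rigidStabilizer (φ ⁻¹' A) :=
  fun w hw => φ.symm_apply_eq.2 (hh (φ w) hw)

theorem inv_mul_mem_rigidStabilizer_compl {A : Set W} {f g : W ≃ₜ W} (hfg : Set.EqOn f g A) :
    g⁻¹ * f ∈ rigidStabilizer Aᶜ :=
  fun _ hw => g.symm_apply_eq.2 (hfg (Set.notMem_compl_iff.1 hw))

theorem commutator_mem_of_eqOn {N : Subgroup (W ≃ₜ W)} (hN : N.Normal) {A : Set W}
    {f g n : W ≃ₜ W} (hg : g ∈ rigidStabilizer A) (hn : n ∈ N)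
    (hnf : Set.EqOn n f A) : f * g * f⁻¹ * g⁻¹ ∈ N := by
  have hcomm : g * (f⁻¹ * n) = f⁻¹ * n * g := commute_of_disjoint_rigidStabilizer
    disjoint_compl_right hg (inv_mul_mem_rigidStabilizer_compl hnf)
  have hconj : n * g * n⁻¹ = f * g * f⁻¹ := by
    rw [mul_inv_eq_iff_eq_mul, mul_assoc f, mul_assoc f, mul_assoc g, hcomm]; group
  rw [← hconj, mul_assoc, mul_assoc, ← mul_assoc g]
  exact N.mul_mem hn (hN.conj_mem _ (N.inv_mem hn) g)

theorem exists_fibre_forall_exists_eqOn {I : Type} [TopologicalSpace I] [DiscreteTopology I]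
    [Countable I] [Infinite I] {b : W → I} (hb : Continuous b) {N : Subgroup (W ≃ₜ W)}
    (hN : Cardinal.mk ((W ≃ₜ W) ⧸ N) < 2 ^ Cardinal.aleph0) :
    ∃ i, ∀ f ∈ rigidStabilizer (b ⁻¹' {i}), ∃ n ∈ N, Set.EqOn n f (b ⁻¹' {i}) := by
  classical
  by_contra! hbad
  choose f hf hfN using hbad
  let part (S : Set I) (i : I) : W ≃ₜ W := if i ∈ S then f i else 1
  have hpart : ∀ S i w, b (part S i w) = b w := by
    intro S i w
    by_cases hi : i ∈ S
    · simp only [part, if_pos hi, apply_eq_of_mem_rigidStabilizer_fibre (hf i)]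
    · simp only [part, if_neg hi, homeo_one_apply]
  -- Independent choices of `f i` or `1` over each fibre: distinct sets give distinct cosets of `N`.
  let k (S : Set I) : W ≃ₜ W := glueSelf hb (part S) (hpart S)
  have hk_subset : ∀ S T, (k S)⁻¹ * k T ∈ N → T ⊆ S := by
    intro S T hST i hiT
    by_contra hiS
    refine hfN i _ hST fun w (hw : b w = i) => (k S).symm_apply_eq.2 ?_
    have hfw : b (f i w) = i := (apply_eq_of_mem_rigidStabilizer_fibre (hf i) w).trans hw
    calc k T w = f i w := by simp only [k, part, glueSelf_apply, hw, if_pos hiT]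
      _ = k S (f i w) := by
        simp only [k, part, glueSelf_apply, hfw, if_neg hiS, homeo_one_apply]
  have hk_inj : Function.Injective fun S : Set I => (QuotientGroup.mk (k S) : (W ≃ₜ W) ⧸ N) :=
    fun S T hST => (hk_subset T S (QuotientGroup.eq.1 hST.symm)).antisymm
      (hk_subset S T (QuotientGroup.eq.1 hST))
  have hcard := Cardinal.lift_mk_le_lift_mk_of_injective hk_inj
  simp only [Cardinal.mk_set, Cardinal.mk_eq_aleph0 I, Cardinal.lift_power, Cardinal.lift_ofNat,
    Cardinal.lift_aleph0, Cardinal.lift_id'] at hcard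
  exact hN.not_ge hcard

theorem zpow_shift_apply {A : Set W} {c : W → ℤ} {σ : W ≃ₜ W} (hσ : σ ∈ rigidStabilizer A)
    (hcσ : ∀ w ∈ A, c (σ w) = c w + 1) (k : ℤ) {w : W} (hw : w ∈ A) : c ((σ ^ k) w) = c w + k := by
  have hstep : ∀ j : ℤ, c ((σ ^ (j + 1)) w) = c ((σ ^ j) w) + 1 := fun j => by
    rw [zpow_add_one, (Commute.zpow_self σ j).eq, homeo_mul_apply]
    exact hcσ _ ((apply_mem_iff_of_mem_rigidStabilizer (zpow_mem hσ j)).2 hw)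
  induction k using Int.induction_on with
  | zero => rw [zpow_zero, homeo_one_apply, add_zero]
  | succ j ih => rw [hstep, ih, add_assoc]
  | pred j ih =>
    have hprev := hstep (-j - 1)
    rw [sub_add_cancel] at hprev
    linarith

theorem zpow_conj_shift_apply {A : Set W} {c : W → ℤ} {σ h : W ≃ₜ W} (hσ : σ ∈ rigidStabilizer A)
    (hcσ : ∀ w ∈ A, c (σ w) = c w + 1) (hh : h ∈ rigidStabilizer A) (hhc : ∀ w, c (h w) = c w)
    (k : ℤ) {w : W} (hw : w ∈ A) : c ((σ ^ k * h * σ ^ (-k)) w) = c w := by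
  have hσw := (apply_mem_iff_of_mem_rigidStabilizer (zpow_mem hσ (-k))).2 hw
  have hhσw := (apply_mem_iff_of_mem_rigidStabilizer hh).2 hσw
  rw [homeo_mul_apply, homeo_mul_apply, zpow_shift_apply hσ hcσ k hhσw, hhc,
    zpow_shift_apply hσ hcσ (-k) hw, neg_add_cancel_right]

theorem exists_commutator_eq_of_shift {A : Set W} {c : W → ℤ} (hc : Continuous c) {σ h : W ≃ₜ W}
    (hσ : σ ∈ rigidStabilizer A) (hcσ : ∀ w ∈ A, c (σ w) = c w + 1)
    (hh : h ∈ rigidStabilizer (A ∩ c ⁻¹' {0})) :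
    ∃ f ∈ rigidStabilizer A, h = f * σ * f⁻¹ * σ⁻¹ := by
  have hhc : ∀ w, c (h w) = c w := apply_eq_of_mem_rigidStabilizer_fibre
    fun w hw => hh w fun hw' => hw hw'.2
  have hhA : h ∈ rigidStabilizer A := fun w hw => hh w fun hw' => hw hw'.1
  -- `part` glues to the infinite product of the `σ ^ j * h * σ ^ (-j)` over `j ≥ 0`; conjugating
  -- that product by `σ` drops its factor `j = 0`, which is `h`.
  let part (j : ℤ) : W ≃ₜ W := if 0 ≤ j then σ ^ j * h * σ ^ (-j) else 1
  have hpartA : ∀ j, part j ∈ rigidStabilizer A := by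
    intro j
    by_cases hj : 0 ≤ j
    · simp only [part, if_pos hj]
      exact mul_mem (mul_mem (zpow_mem hσ _) hhA) (zpow_mem hσ _)
    · simp only [part, if_neg hj, one_mem]
  have hpart : ∀ j w, c (part j w) = c w := by
    intro j w
    by_cases hw : w ∈ A
    · by_cases hj : 0 ≤ j
      · simp only [part, if_pos hj, zpow_conj_shift_apply hσ hcσ hhA hhc j hw]
      · simp only [part, if_neg hj, homeo_one_apply]
    · rw [hpartA j w hw]
  refine ⟨glueSelf hc part hpart, fun w hw => hpartA _ w hw, ?_⟩
  rw [eq_mul_inv_iff_mul_eq, eq_mul_inv_iff_mul_eq]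
  refine Homeomorph.ext fun w => ?_
  by_cases hw : w ∈ A
  · have hfix (hj : c w + 1 ≠ 0) : h (σ (part (c w) w)) = σ (part (c w) w) := by
      have hcσ' := hcσ _ ((apply_mem_iff_of_mem_rigidStabilizer (hpartA (c w))).2 hw)
      exact hh _ fun hw' => hj (by rw [← hpart (c w) w, ← hcσ']; exact hw'.2)
    simp only [homeo_mul_apply, glueSelf_apply, hcσ w hw]
    obtain hj | hj | hj := lt_trichotomy (c w + 1) 0
    · rw [hfix hj.ne]
      simp only [part, if_neg (show ¬0 ≤ c w by omega), if_neg hj.not_ge, homeo_one_apply]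
    · simp only [part, if_neg (show ¬0 ≤ c w by omega), hj, le_refl, if_true, homeo_one_apply,
        zpow_zero, neg_zero, one_mul, mul_one]
    · rw [hfix hj.ne']
      simp only [part, if_pos (show 0 ≤ c w by omega), if_pos hj.le, ← homeo_mul_apply]
      congr 1
      group
  · simp only [homeo_mul_apply, glueSelf_apply, hpartA _ w hw, hσ w hw, hhA w hw]

theorem exists_rigidStabilizer_le_of_shift {I : Type} [TopologicalSpace I] [DiscreteTopology I]
    [Countable I] [Infinite I] {b : W → I} (hb : Continuous b) {c : W → ℤ} (hc : Continuous c)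
    {σ : W ≃ₜ W} (hbσ : ∀ w, b (σ w) = b w) (hcσ : ∀ w, c (σ w) = c w + 1)
    {N : Subgroup (W ≃ₜ W)} (hNnormal : N.Normal)
    (hN : Cardinal.mk ((W ≃ₜ W) ⧸ N) < 2 ^ Cardinal.aleph0) :
    ∃ i, rigidStabilizer (b ⁻¹' {i} ∩ c ⁻¹' {0}) ≤ N := by
  classical
  obtain ⟨i, hi⟩ := exists_fibre_forall_exists_eqOn hb hN
  refine ⟨i, fun h hh => ?_⟩
  let part (j : I) : W ≃ₜ W := if j = i then σ else 1
  have hpart : ∀ j w, b (part j w) = b w := by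
    intro j w
    by_cases hj : j = i
    · simp only [part, if_pos hj, hbσ]
    · simp only [part, if_neg hj, homeo_one_apply]
  let σi : W ≃ₜ W := glueSelf hb part hpart
  have hσi : σi ∈ rigidStabilizer (b ⁻¹' {i}) := fun w (hw : b w ≠ i) => by
    simp only [σi, part, glueSelf_apply, if_neg hw, homeo_one_apply]
  have hcσi : ∀ w ∈ b ⁻¹' {i}, c (σi w) = c w + 1 := fun w (hw : b w = i) => by
    simp only [σi, part, glueSelf_apply, if_pos hw, hcσ]
  obtain ⟨f, hf, hcomm⟩ := exists_commutator_eq_of_shift hc hσi hcσi hh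
  obtain ⟨n, hn, hnf⟩ := hi f hf
  exact hcomm ▸ commutator_mem_of_eqOn hNnormal hσi hn hnf

end RigidStabilizers

/-- The group `G` has no proper normal subgroup of index less than the continuum. -/
def NoProperNormalOfSmallIndex (G : Type*) [Group G] : Prop :=
  ∀ N : Subgroup G, N.Normal → Cardinal.mk (G ⧸ N) < 2 ^ Cardinal.aleph0 → N = ⊤

theorem NoProperNormalOfSmallIndex.of_surjective {G H : Type u} [Group G] [Group H]
    (hG : NoProperNormalOfSmallIndex G) {f : G →* H} (hf : Function.Surjective f) :
    NoProperNormalOfSmallIndex H := by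
  intro N hNnormal hN
  refine Subgroup.comap_injective hf <|
    (hG _ (hNnormal.comap f) ?_).trans (Subgroup.comap_top f).symm
  refine (Cardinal.mk_le_of_injective (f := QuotientGroup.map _ N f le_rfl) ?_).trans_lt hN
  rw [← MonoidHom.ker_eq_bot_iff, QuotientGroup.ker_map, QuotientGroup.map_mk'_self]

section Absorbing

variable {W : Type*} [TopologicalSpace W]

/-- A continuous map to `ℕ` with compact fibres such that every clopen set containing infinitely
many whole fibres is homeomorphic to the whole space. -/
structure IsAbsorbing (p : W → ℕ) : Prop where
  continuous : Continuous p
  isCompact_fibre : ∀ n, IsCompact (p ⁻¹' {n})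
  nonempty_homeo : ∀ A, IsClopen A → {n | p ⁻¹' {n} ⊆ A}.Infinite → Nonempty (A ≃ₜ W)

/-- A moiety: a clopen set which, like its complement, is homeomorphic to the whole space. -/
structure IsMoiety (A : Set W) : Prop where
  isClopen : IsClopen A
  nonempty_homeo : Nonempty (A ≃ₜ W)
  nonempty_compl_homeo : Nonempty (↥Aᶜ ≃ₜ W)

theorem IsMoiety.compl {A : Set W} (hA : IsMoiety A) : IsMoiety Aᶜ :=
  ⟨hA.isClopen.compl, hA.nonempty_compl_homeo, by rw [compl_compl]; exact hA.nonempty_homeo⟩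

theorem IsMoiety.preimage {A : Set W} (hA : IsMoiety A) (g : W ≃ₜ W) : IsMoiety (g ⁻¹' A) :=
  ⟨hA.isClopen.preimage g.continuous, hA.nonempty_homeo.map (g.subtype fun _ => Iff.rfl).trans,
    hA.nonempty_compl_homeo.map (g.subtype fun _ => Iff.rfl).trans⟩

theorem IsMoiety.exists_preimage_eq {A B : Set W} (hA : IsMoiety A) (hB : IsMoiety B) :
    ∃ φ : W ≃ₜ W, φ ⁻¹' B = A := by
  have hfibre : ∀ i, Nonempty (A.boolIndicator ⁻¹' {i} ≃ₜ B.boolIndicator ⁻¹' {i}) := by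
    intro i
    obtain ⟨eA⟩ := hA.nonempty_homeo
    obtain ⟨eA'⟩ := hA.nonempty_compl_homeo
    obtain ⟨eB⟩ := hB.nonempty_homeo
    obtain ⟨eB'⟩ := hB.nonempty_compl_homeo
    cases i
    · rw [Set.preimage_boolIndicator_false, Set.preimage_boolIndicator_false]
      exact ⟨eA'.trans eB'.symm⟩
    · rw [Set.preimage_boolIndicator_true, Set.preimage_boolIndicator_true]
      exact ⟨eA.trans eB.symm⟩
  obtain ⟨φ, hφ⟩ := exists_homeo_comp_eq
    ((continuous_boolIndicator_iff_isClopen A).2 hA.isClopen)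
    ((continuous_boolIndicator_iff_isClopen B).2 hB.isClopen) hfibre
  exact ⟨φ, Set.ext fun w => by
    rw [Set.mem_preimage, Set.mem_iff_boolIndicator, hφ, ← Set.mem_iff_boolIndicator]⟩

theorem IsMoiety.rigidStabilizer_le {A B : Set W} (hA : IsMoiety A) (hB : IsMoiety B)
    {N : Subgroup (W ≃ₜ W)} (hNnormal : N.Normal) (hAN : rigidStabilizer A ≤ N) :
    rigidStabilizer B ≤ N := by
  intro h hh
  obtain ⟨φ, rfl⟩ := hA.exists_preimage_eq hB
  simpa only [mul_assoc, mul_inv_cancel_left, mul_inv_cancel, mul_one] using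
    hNnormal.conj_mem _ (hAN (conj_mem_rigidStabilizer φ hh)) φ

namespace IsAbsorbing

variable {p : W → ℕ}

theorem nonempty_preimage_homeo (hp : IsAbsorbing p) {S : Set ℕ} (hS : S.Infinite) :
    Nonempty (p ⁻¹' S ≃ₜ W) :=
  hp.nonempty_homeo _ ((isClopen_discrete S).preimage hp.continuous) <|
    hS.mono fun _ hn => Set.preimage_mono (Set.singleton_subset_iff.2 hn)

theorem isMoiety_preimage (hp : IsAbsorbing p) {S : Set ℕ} (hS : S.Infinite) (hS' : Sᶜ.Infinite) :
    IsMoiety (p ⁻¹' S) :=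
  ⟨(isClopen_discrete S).preimage hp.continuous, hp.nonempty_preimage_homeo hS,
    hp.nonempty_preimage_homeo hS'⟩

theorem exists_homeo_perm (hp : IsAbsorbing p) {I : Type*}
    [TopologicalSpace I] [DiscreteTopology I] {q : ℕ → I}
    (hq : ∀ i, (q ⁻¹' {i}).Infinite) (τ : Equiv.Perm I) :
    ∃ σ : W ≃ₜ W, ∀ w, q (p (σ w)) = τ (q (p w)) := by
  have hqp : Continuous (q ∘ p) := continuous_of_discreteTopology.comp hp.continuous
  have hfibre : ∀ i, Nonempty ((τ ∘ q ∘ p) ⁻¹' {i} ≃ₜ (q ∘ p) ⁻¹' {i}) := by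
    intro i
    obtain ⟨e⟩ := hp.nonempty_preimage_homeo (hq (τ.symm i))
    obtain ⟨e'⟩ := hp.nonempty_preimage_homeo (hq i)
    rw [Set.preimage_comp, ← τ.image_symm_eq_preimage, Set.image_singleton]
    exact ⟨e.trans e'.symm⟩
  exact exists_homeo_comp_eq (continuous_of_discreteTopology.comp hqp) hqp hfibre

theorem exists_moiety_rigidStabilizer_le (hp : IsAbsorbing p) {N : Subgroup (W ≃ₜ W)}
    (hNnormal : N.Normal) (hN : Cardinal.mk ((W ≃ₜ W) ⧸ N) < 2 ^ Cardinal.aleph0) :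
    ∃ A, IsMoiety A ∧ rigidStabilizer A ≤ N := by
  let e : ℕ ≃ (ℤ × ℤ) × ℕ := (Denumerable.eqv _).symm
  let q (n : ℕ) : ℤ × ℤ := (e n).1
  have hq : ∀ i, (q ⁻¹' {i}).Infinite := fun i =>
    Set.infinite_of_injective_forall_mem (f := fun n => e.symm (i, n))
      (e.symm.injective.comp (Prod.mk_right_injective i)) fun n => by
        simp only [q, Set.mem_preimage, e.apply_symm_apply, Set.mem_singleton_iff]
  obtain ⟨σ, hσ⟩ := hp.exists_homeo_perm hq ((Equiv.refl ℤ).prodCongr (Equiv.addRight 1))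
  have hqp : Continuous (q ∘ p) := continuous_of_discreteTopology.comp hp.continuous
  obtain ⟨i, hi⟩ := exists_rigidStabilizer_le_of_shift (b := fun w => (q (p w)).1)
    (c := fun w => (q (p w)).2) (continuous_fst.comp hqp) (continuous_snd.comp hqp) (σ := σ)
    (fun w => by rw [hσ]; rfl) (fun w => by rw [hσ]; rfl) hNnormal hN
  refine ⟨p ⁻¹' (q ⁻¹' {(i, 0)}), hp.isMoiety_preimage (hq _) ((hq (i, 1)).mono ?_), ?_⟩
  · exact fun n hn hn' => one_ne_zero (congrArg Prod.snd (hn.symm.trans hn'))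
  · convert hi using 2
    ext w
    exact Prod.ext_iff

theorem finite_meeting_fibres (hp : IsAbsorbing p) (g : W ≃ₜ W) (n : ℕ) :
    {m | ∃ w, p w = n ∧ p (g w) = m}.Finite := by
  have hcompact : IsCompact ((fun w => p (g w)) '' (p ⁻¹' {n})) :=
    (hp.isCompact_fibre n).image (hp.continuous.comp g.continuous)
  exact hcompact.finite_of_discrete

theorem exists_unrelated_seq (hp : IsAbsorbing p) (g : W ≃ₜ W) :
    ∃ t : ℕ → ℕ, t.Injective ∧ ∀ w i j, i ≠ j → p w = t i → p (g w) ≠ t j := by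
  let r (n m : ℕ) : Prop := n ≠ m ∧ (∀ w, p w = n → p (g w) ≠ m) ∧ ∀ w, p w = m → p (g w) ≠ n
  have hr : Std.Symm r := ⟨fun _ _ h => ⟨h.1.symm, h.2.2, h.2.1⟩⟩
  obtain ⟨t, -, ht⟩ := exists_seq_of_forall_finset_exists' (fun _ => True) r fun s _ => by
    have hfinite (n : ℕ) : ({n} ∪ {m | ∃ w, p w = n ∧ p (g w) = m} ∪
        {m | ∃ w, p w = n ∧ p (g⁻¹ w) = m}).Finite :=
      ((Set.finite_singleton n).union (hp.finite_meeting_fibres g n)).union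
        (hp.finite_meeting_fibres g⁻¹ n)
    obtain ⟨m, hm⟩ := (s.finite_toSet.biUnion fun n _ => hfinite n).exists_notMem
    simp only [Set.mem_iUnion, Set.mem_union, Set.mem_singleton_iff, Set.mem_ofPred_eq] at hm
    refine ⟨m, trivial, fun n hn => ⟨fun h => hm ?_, fun w hw hgw => hm ?_, fun w hw hgw => hm ?_⟩⟩
    · exact ⟨n, hn, .inl (.inl h.symm)⟩
    · exact ⟨n, hn, .inl (.inr ⟨w, hw, hgw⟩)⟩
    · exact ⟨n, hn, .inr ⟨g w, hgw, by rwa [homeo_inv_apply, g.symm_apply_apply]⟩⟩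
  exact ⟨t, fun i j hij => by_contra fun h => (ht h).1 hij, fun w i j h => (ht h).2.1 w⟩

theorem exists_unrelated_sets (hp : IsAbsorbing p) (g : W ≃ₜ W) :
    ∃ T : ℕ → Set ℕ, (∀ i, (T i).Infinite) ∧ ∀ i j, i ≠ j → Disjoint (T i) (T j) ∧
      Disjoint (p ⁻¹' T i) (g ⁻¹' (p ⁻¹' T j)) := by
  obtain ⟨t, ht, htg⟩ := hp.exists_unrelated_seq g
  refine ⟨fun i => t '' {n | n.unpair.1 = i}, fun i => .image ht.injOn ?_, fun i j hij => ⟨?_, ?_⟩⟩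
  · refine Set.infinite_of_injective_forall_mem (f := Nat.pair i) (fun m n h => ?_) fun n => ?_
    · exact (Nat.pair_eq_pair.1 h).2
    · exact congrArg Prod.fst (Nat.unpair_pair i n)
  · exact (Set.disjoint_image_iff ht).2 <|
      Set.disjoint_left.2 fun n hi hj => hij (hi.symm.trans hj)
  · rw [Set.disjoint_left]
    rintro w ⟨m, hm, hmw⟩ ⟨n, hn, hnw⟩
    exact htg w m n (fun h => hij (hm.symm.trans (h ▸ hn))) hmw.symm hnw.symm

theorem noProperNormalOfSmallIndex (hp : IsAbsorbing p) :
    NoProperNormalOfSmallIndex (W ≃ₜ W) := by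
  intro N hNnormal hN
  obtain ⟨A, hA, hAN⟩ := hp.exists_moiety_rigidStabilizer_le hNnormal hN
  refine eq_top_iff.2 fun g _ => ?_
  obtain ⟨T, hT, hTg⟩ := hp.exists_unrelated_sets g
  have hmoiety {i j : ℕ} (hij : i ≠ j) : IsMoiety (p ⁻¹' T i) :=
    hp.isMoiety_preimage (hT i) ((hT j).mono (hTg i j hij).1.symm.subset_compl_right)
  have hM : IsMoiety (p ⁻¹' T 0) := hmoiety zero_ne_one
  have hC : IsMoiety (p ⁻¹' T 2) := hmoiety (OfNat.ofNat_ne_one 2)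
  have hMC : Disjoint (p ⁻¹' T 0) (p ⁻¹' T 2) := (hTg 0 2 two_ne_zero.symm).1.preimage p
  have hrest (B : Set W) (hB : IsClopen B) (hdisj : Disjoint (p ⁻¹' T 1) B) :
      Nonempty (↥(p ⁻¹' T 0 ∪ B)ᶜ ≃ₜ W) := by
    refine hp.nonempty_homeo _ (hM.isClopen.union hB).compl ((hT 1).mono fun n hn => ?_)
    refine (Set.preimage_mono (Set.singleton_subset_iff.2 hn)).trans ?_
    exact (Disjoint.sup_right ((hTg 1 0 one_ne_zero).1.preimage p) hdisj).subset_compl_right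
  obtain ⟨e⟩ := hrest (g ⁻¹' (p ⁻¹' T 2)) (hC.isClopen.preimage g.continuous)
    (hTg 1 2 (OfNat.one_ne_ofNat 2)).2
  obtain ⟨e'⟩ := hrest (p ⁻¹' T 2) hC.isClopen ((hTg 1 2 (OfNat.one_ne_ofNat 2)).1.preimage p)
  obtain ⟨k, hkM, hkC⟩ := exists_homeo_eqOn_eqOn hM.isClopen hC.isClopen hMC (u := 1) (v := g)
    (hTg 0 2 two_ne_zero.symm).2 (e.trans e'.symm)
  have hk : k ∈ rigidStabilizer (p ⁻¹' T 0)ᶜ := fun w hw => hkM (Set.notMem_compl_iff.1 hw)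
  have hgk := inv_mul_mem_rigidStabilizer_compl hkC
  -- `g` is thus a product of two homeomorphisms supported on moieties.
  rw [show g = k * (g⁻¹ * k)⁻¹ by group]
  exact N.mul_mem (hA.rigidStabilizer_le hM.compl hNnormal hAN hk)
    (N.inv_mem (hA.rigidStabilizer_le (hC.preimage g).compl hNnormal hAN hgk))

end IsAbsorbing

end Absorbing

theorem NoProperNormalOfSmallIndex.of_isEmbedding_compl_singleton {W X : Type u}
    [TopologicalSpace W] [TopologicalSpace X] [T2Space X] [CompactSpace X]
    (hW : NoProperNormalOfSmallIndex (W ≃ₜ W)) {q : W → X} {y : X} (hq : IsEmbedding q)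
    (hrange : Set.range q = {y}ᶜ) (hfix : ∀ g : X ≃ₜ X, g y = y) :
    NoProperNormalOfSmallIndex (X ≃ₜ X) := by
  let c : OnePoint W ≃ₜ X := OnePoint.equivOfIsEmbeddingOfRangeEq y q hq hrange
  let extend : (W ≃ₜ W) →* (X ≃ₜ X) :=
    { toFun h := (c.symm.trans h.onePointCongr).trans c
      map_one' := by
        refine Homeomorph.ext fun x => ?_
        obtain ⟨z, rfl⟩ := c.surjective x
        cases z using OnePoint.rec <;> simp
      map_mul' f g := by
        refine Homeomorph.ext fun x => ?_
        obtain ⟨z, rfl⟩ := c.surjective x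
        rw [homeo_mul_apply]
        cases z using OnePoint.rec <;> simp }
  have hextend (h : W ≃ₜ W) (w : W) : extend h (q w) = q (h w) := by
    change c (h.onePointCongr (c.symm (c (w : OnePoint W)))) = _
    rw [c.symm_apply_apply]
    rfl
  refine hW.of_surjective (f := extend) fun g => ?_
  have hg (x : X) : x ∈ Set.range q ↔ g x ∈ Set.range q := by
    rw [hrange, Set.mem_compl_singleton_iff, Set.mem_compl_singleton_iff, ← g.injective.ne_iff,
      hfix]
  let r := hq.toHomeomorph
  let h : W ≃ₜ W := (r.trans (g.subtype hg)).trans r.symm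
  have hh (w : W) : q (h w) = g (q w) := congrArg Subtype.val (r.apply_symm_apply _)
  refine ⟨h, Homeomorph.ext fun x => ?_⟩
  by_cases hx : x = y
  · rw [hx, hfix, hfix]
  · obtain ⟨w, rfl⟩ : x ∈ Set.range q := hrange ▸ hx
    rw [hextend, hh]

section OrdinalIntervals

theorem isEmbedding_of_strictMono_of_continuous {α β : Type*} [LinearOrder α] [LinearOrder β]
    [TopologicalSpace α] [OrderTopology α] [TopologicalSpace β] [OrderTopology β] {f : α → β}
    (hf : StrictMono f) (hf' : Continuous f) : IsEmbedding f := by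
  refine ⟨⟨le_antisymm hf'.le_induced ?_⟩, hf.injective⟩
  rw [OrderTopology.topology_eq_generate_intervals (α := α)]
  refine le_generateFrom ?_
  rintro s ⟨c, rfl | rfl⟩
  · exact ⟨Set.Ioi (f c), isOpen_Ioi, Set.ext fun x => hf.lt_iff_lt⟩
  · exact ⟨Set.Iio (f c), isOpen_Iio, Set.ext fun x => hf.lt_iff_lt⟩

theorem isNormal_of_isClosed_range {α β : Type*} [LinearOrder α]
    [ConditionallyCompleteLinearOrder β] [TopologicalSpace β] [OrderTopology β] {f : α → β}
    (hf : StrictMono f) (hclosed : IsClosed (Set.range f)) : Order.IsNormal f := by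
  refine Order.isNormal_iff.2 ⟨hf, fun o ho a ha => ?_⟩
  have hne : (f '' Set.Iio o).Nonempty := ho.nonempty_Iio.image f
  have hlub : IsLUB (f '' Set.Iio o) (sSup (f '' Set.Iio o)) :=
    isLUB_csSup hne ⟨a, Set.forall_mem_image.2 ha⟩
  obtain ⟨y, hy⟩ : sSup (f '' Set.Iio o) ∈ Set.range f :=
    closure_minimal (Set.image_subset_range _ _) hclosed (hlub.mem_closure hne)
  rw [← hy] at hlub
  have hoy : o ≤ y := le_of_forall_lt fun b hb => by
    obtain ⟨b', hb', hbb'⟩ := ho.lt_iff_exists_lt.1 hb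
    exact hbb'.trans_le (hf.le_iff_le.1 (hlub.1 (Set.mem_image_of_mem f hb')))
  exact (hf.monotone hoy).trans (hlub.2 (Set.forall_mem_image.2 ha))

theorem enumOrd_le_add_of_Ioc_subset {s : Set Ordinal.{u}} {b c : Ordinal.{u}}
    (hb : enumOrd s 0 ≤ b) (hs : Set.Ioc b (b + c) ⊆ s) : enumOrd s c ≤ b + c := by
  suffices ∀ ξ ≤ c, enumOrd s ξ ≤ b + ξ from this c le_rfl
  intro ξ
  induction ξ using WellFoundedLT.induction with
  | _ ξ ih =>
    intro hξ
    obtain rfl | hpos := eq_zero_or_pos ξ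
    · rwa [add_zero]
    · refine enumOrd_le_of_forall_lt (hs ⟨lt_add_of_pos_right b hpos, by gcongr⟩) fun ζ hζ => ?_
      exact (ih ζ hζ (hζ.le.trans hξ)).trans_lt (by gcongr)

theorem enumOrd_eq_self {s : Set Ordinal.{u}} {γ : Ordinal.{u}} (hs : ¬ BddAbove s)
    (h0 : enumOrd s 0 = 0) (hγ : γ ∈ s)
    (hgap : ∀ c < γ, ∃ b, b + c < γ ∧ Set.Ioc b (b + c) ⊆ s) : enumOrd s γ = γ := by
  refine (enumOrd_le_of_forall_lt hγ fun c hc => ?_).antisymm (le_enumOrd_self hs)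
  obtain ⟨b, hbγ, hb⟩ := hgap c hc
  exact (enumOrd_le_add_of_Ioc_subset (h0.trans_le zero_le) hb).trans_lt hbγ

theorem nonempty_Ioo_diff_homeo {γ : Ordinal.{u}} {T : Set Ordinal.{u}} (hT : IsOpen T)
    (hTγ : T ⊆ Set.Ioo 0 γ) (hgap : ∀ c < γ, ∃ b, b + c < γ ∧ Set.Ioc b (b + c) ⊆ Tᶜ) :
    Nonempty (↥(Set.Ioo 0 γ \ T) ≃ₜ Set.Ioo 0 γ) := by
  have hub : ¬ BddAbove Tᶜ := not_bddAbove_iff.2 fun x =>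
    ⟨max (x + 1) γ, fun h => (hTγ h).2.not_ge (le_max_right _ _),
      (lt_add_one x).trans_le (le_max_left _ _)⟩
  have h0 : enumOrd Tᶜ 0 = 0 := by
    rw [enumOrd_zero]
    exact le_bot_iff.1 (csInf_le' fun h => (hTγ h).1.false)
  have hγ : enumOrd Tᶜ γ = γ := enumOrd_eq_self hub h0 (fun h => (hTγ h).2.false) hgap
  have hmono := enumOrd_strictMono hub
  have hcont : Continuous (enumOrd Tᶜ) := by
    refine (isNormal_of_isClosed_range hmono ?_).continuous
    rw [range_enumOrd hub]
    exact hT.isClosed_compl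
  let f (x : Set.Ioo 0 γ) : Ordinal := enumOrd Tᶜ x
  have hf : IsEmbedding f := isEmbedding_of_strictMono_of_continuous
    (hmono.comp (Subtype.strictMono_coe _)) (hcont.comp continuous_subtype_val)
  have hrange : Set.range f = Set.Ioo 0 γ \ T := by
    ext x
    constructor
    · rintro ⟨⟨y, hy⟩, rfl⟩
      exact ⟨⟨h0.symm.trans_lt (hmono hy.1), (hmono hy.2).trans_eq hγ⟩, enumOrd_mem hub y⟩
    · rintro ⟨hx, hxT⟩
      obtain ⟨y, rfl⟩ := enumOrd_surjective hub hxT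
      rw [← hγ, ← h0] at hx
      exact ⟨⟨y, hmono.lt_iff_lt.1 (h0 ▸ hx.1), hmono.lt_iff_lt.1 hx.2⟩, rfl⟩
  exact ⟨(hf.toHomeomorph.trans (Homeomorph.setCongr hrange)).symm⟩

/-- The sums `c 0 + ⋯ + c (n - 1)`, the endpoints of consecutive intervals of lengths
`c 0, c 1, …`; `Finset.sum` is unavailable, ordinal addition not being commutative. -/
def partialSum (c : ℕ → Ordinal.{u}) : ℕ → Ordinal.{u}
  | 0 => 0
  | n + 1 => partialSum c n + c n

theorem partialSum_strictMono {c : ℕ → Ordinal.{u}} (hc : ∀ n, 0 < c n) :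
    StrictMono (partialSum c) :=
  strictMono_nat_of_lt_succ fun n => lt_add_of_pos_right _ (hc n)

theorem partialSum_lt {c : ℕ → Ordinal.{u}} {γ : Ordinal.{u}} (hγ : IsPrincipal (· + ·) γ)
    (hγ0 : 0 < γ) (hc : ∀ n, c n < γ) (n : ℕ) : partialSum c n < γ := by
  induction n with
  | zero => exact hγ0
  | succ n ih => exact hγ ih (hc n)

theorem exists_forall_eq_iff_mem_Ioc {S : ℕ → Ordinal.{u}} {γ : Ordinal.{u}} (hS : StrictMono S)
    (hS0 : S 0 = 0) (hSγ : ∀ x < γ, ∃ n, x ≤ S n) :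
    ∃ p : Set.Ioo 0 γ → ℕ, ∀ x n, p x = n ↔ (x : Ordinal) ∈ Set.Ioc (S n) (S (n + 1)) := by
  classical
  have hex (x : Set.Ioo 0 γ) : ∃ n, (x : Ordinal) ≤ S (n + 1) :=
    (hSγ x x.2.2).imp fun n hn => hn.trans (hS.monotone n.le_succ)
  refine ⟨fun x => Nat.find (hex x), fun x n => (Nat.find_eq_iff _).trans
    ⟨fun ⟨hle, hlt⟩ => ⟨?_, hle⟩, fun ⟨hlt, hle⟩ => ⟨hle, fun m hm h => ?_⟩⟩⟩
  · cases n with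
    | zero => exact hS0.trans_lt x.2.1
    | succ n => exact not_le.1 (hlt n n.lt_succ_self)
  · exact (h.trans (hS.monotone hm)).not_gt hlt

theorem exists_isAbsorbing_Ioo {γ : Ordinal.{u}} {c : ℕ → Ordinal.{u}} (hpos : ∀ n, 0 < c n)
    (hγ : IsPrincipal (· + ·) γ) (hcγ : ∀ n, c n < γ)
    (hc : ∀ x < γ, ∀ᶠ n in Filter.atTop, x ≤ c n) : ∃ p : Set.Ioo 0 γ → ℕ, IsAbsorbing p := by
  have hSγ := partialSum_lt hγ ((hpos 0).trans (hcγ 0)) hcγ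
  obtain ⟨p, hp⟩ := exists_forall_eq_iff_mem_Ioc (partialSum_strictMono hpos) rfl fun x hx =>
    (hc x hx).exists.imp' (· + 1) fun n hn => hn.trans (le_add_of_nonneg_left zero_le)
  have hfibre (n : ℕ) :
      p ⁻¹' {n} = Subtype.val ⁻¹' Set.Ioc (partialSum c n) (partialSum c (n + 1)) :=
    Set.ext fun x => hp x n
  have himage (n : ℕ) :
      Subtype.val '' (p ⁻¹' {n}) = Set.Ioc (partialSum c n) (partialSum c (n + 1)) := by
    rw [hfibre, Subtype.image_preimage_coe, Set.inter_eq_right]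
    exact fun x hx => ⟨zero_le.trans_lt hx.1, hx.2.trans_lt (hSγ _)⟩
  refine ⟨p, continuous_discrete_rng.2 fun n => ?_, fun n => ?_, fun A hA hinf => ?_⟩
  · rw [hfibre, ← Set.Ioo_add_one_right_eq_Ioc]
    exact isOpen_Ioo.preimage continuous_subtype_val
  · rw [Subtype.isCompact_iff, himage, ← Set.Icc_add_one_left_eq_Ioc]
    exact isCompact_Icc
  · let T : Set Ordinal := Subtype.val '' Aᶜ
    have hT : IsOpen T := isOpen_Ioo.isOpenMap_subtype_val _ hA.compl.isOpen
    have hgap : ∀ d < γ, ∃ b, b + d < γ ∧ Set.Ioc b (b + d) ⊆ Tᶜ := by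
      intro d hd
      obtain ⟨n, hn, hdn⟩ := (Nat.frequently_atTop_iff_infinite.2 hinf).and_eventually (hc d hd)
        |>.exists
      have hle : partialSum c n + d ≤ partialSum c n + c n := by gcongr
      refine ⟨partialSum c n, hγ (hSγ n) hd, ?_⟩
      refine (Set.Ioc_subset_Ioc_right hle).trans ((himage n).superset.trans ?_)
      exact Set.subset_compl_iff_disjoint_right.2
        ((Set.disjoint_image_iff Subtype.val_injective).2 <|
          Set.disjoint_compl_right_iff_subset.2 hn)
    obtain ⟨e⟩ := nonempty_Ioo_diff_homeo hT (Subtype.coe_image_subset _ _) hgap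
    have hA' : Subtype.val '' A = Set.Ioo 0 γ \ T := by
      rw [← compl_compl A, Set.image_compl_eq_range_sdiff_image Subtype.val_injective,
        Subtype.range_coe]
    exact ⟨((IsEmbedding.subtypeVal.homeomorphImage A).trans (Homeomorph.setCongr hA')).trans e⟩

theorem cof_omega0_opow {α : Ordinal.{u}} (hα : α ≠ 0) (hcof : α.cof ≤ Cardinal.aleph0) :
    (ω ^ α).cof = Cardinal.aleph0 := by
  have hlimit : Order.IsSuccLimit (ω ^ α) := isSuccLimit_opow_left isSuccLimit_omega0 hα
  refine (aleph0_le_cof_iff.2 (one_lt_cof_iff.2 hlimit)).antisymm' ?_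
  induction α using limitRecOn with
  | zero => exact absurd rfl hα
  | add_one β =>
    rw [opow_add_one, cof_map_of_isNormal (isNormal_mul_right (opow_pos β omega0_pos))
      isSuccLimit_omega0, cof_omega0]
  | limit β hβ => rwa [cof_map_of_isNormal (isNormal_opow one_lt_omega0) hβ]

theorem exists_seq_of_cof_eq_aleph0 {γ : Ordinal.{u}} (hγ : γ.cof = Cardinal.aleph0) :
    ∃ c : ℕ → Ordinal.{u}, (∀ n, 0 < c n) ∧ (∀ n, c n < γ) ∧
      ∀ x < γ, ∀ᶠ n in Filter.atTop, x ≤ c n := by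
  obtain ⟨f, hf⟩ := exists_isFundamentalSeq (a := ω) (by rw [hγ, Cardinal.ord_aleph0])
  have hlt : ∀ {m n : ℕ}, m < n → (f ⟨m, natCast_lt_omega0 m⟩ : Ordinal) <
      f ⟨n, natCast_lt_omega0 n⟩ := fun h => hf.strictMono (Subtype.mk_lt_mk.2 (Nat.cast_lt.2 h))
  refine ⟨fun n => f ⟨(n + 1 : ℕ), natCast_lt_omega0 _⟩, fun n => ?_, fun n => (f _).2,
    fun x hx => ?_⟩
  · exact zero_le.trans_lt (hlt n.succ_pos)
  · obtain ⟨_, ⟨⟨y, hy⟩, rfl⟩, hxy⟩ := hf.isCofinal_range ⟨x, hx⟩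
    obtain ⟨m, rfl⟩ := lt_omega0.1 hy
    filter_upwards [Filter.eventually_ge_atTop m] with n hn
    exact hxy.trans (hlt (Nat.lt_succ_of_le hn)).le

end OrdinalIntervals

section DerivedSets

theorem mem_derivedSet_OrdIcc_iff {γ : Ordinal.{u}} {s : Set Ordinal.{u}} {x : OrdIcc γ} :
    x ∈ derivedSet (Subtype.val ⁻¹' s : Set (OrdIcc γ)) ↔
      ∀ c < (x : Ordinal), ∃ y ∈ s, c < y ∧ y < x := by
  rw [mem_derivedSet, accPt_iff_nhds]
  constructor
  · intro h c hc
    have hU : {y : OrdIcc γ | c < y ∧ (y : Ordinal) < x + 1} ∈ 𝓝 x :=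
      ((isOpen_lt continuous_const continuous_subtype_val).inter
        (isOpen_lt continuous_subtype_val continuous_const)).mem_nhds
          ⟨hc, lt_add_one (x : Ordinal)⟩
    obtain ⟨y, ⟨⟨hcy, hyx⟩, hys⟩, hne⟩ := h _ hU
    exact ⟨y, hys, hcy, (Order.lt_add_one_iff.1 hyx).lt_of_ne (Subtype.coe_ne_coe.2 hne)⟩
  · intro h U hU
    obtain ⟨V, hV, hVU⟩ := (mem_nhds_subtype _ _ _).1 hU
    obtain ⟨c, hc, hcV⟩ := exists_Ioc_subset_of_mem_nhds hV ⟨0, zero_lt_one.trans_le x.2.1⟩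
    obtain ⟨y, hys, hcy, hyx⟩ := h c hc
    have hy : y ∈ Set.Icc 1 γ := ⟨Order.one_le_iff_pos.2 (zero_le.trans_lt hcy), hyx.le.trans x.2.2⟩
    exact ⟨⟨y, hy⟩, ⟨hVU (hcV ⟨hcy, hyx.le⟩), hys⟩, fun h => hyx.ne (congrArg Subtype.val h)⟩

theorem mul_omega0_dvd_iff {β x : Ordinal.{u}} (hx : 0 < x) :
    β * ω ∣ x ↔ ∀ c < x, ∃ y, β ∣ y ∧ c < y ∧ y < x := by
  constructor
  · rintro ⟨q, rfl⟩ c hc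
    rw [mul_assoc] at hc hx ⊢
    have hlim : Order.IsSuccLimit (ω * q) := by
      rw [Ordinal.isSuccLimit_iff, isSuccPrelimit_iff_omega0_dvd]
      exact ⟨right_ne_zero_of_mul hx.ne', dvd_mul_right _ _⟩
    obtain ⟨d, hd, hcd⟩ := (lt_mul_iff_of_isSuccLimit hlim).1 hc
    exact ⟨β * d, dvd_mul_right _ _, hcd,
      mul_lt_mul_of_pos_left hd (pos_of_ne_zero (left_ne_zero_of_mul hx.ne'))⟩
  · intro h
    have hβ : 0 < β := by
      obtain ⟨_, ⟨q, rfl⟩, hy, -⟩ := h 0 hx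
      exact pos_of_ne_zero (left_ne_zero_of_mul hy.ne')
    have hmod : x % β = 0 := by
      by_contra hne
      have hlt : β * (x / β) < x := by
        conv_rhs => rw [← div_add_mod x β]
        exact lt_add_of_pos_right _ (pos_of_ne_zero hne)
      obtain ⟨_, ⟨q, rfl⟩, hq, hqx⟩ := h _ hlt
      exact hqx.not_gt ((lt_mul_iff_div_lt hβ.ne').2 (lt_of_mul_lt_mul_left' hq))
    obtain ⟨q, rfl⟩ := dvd_of_mod_eq_zero hmod
    refine mul_dvd_mul_left β (isSuccPrelimit_iff_omega0_dvd.1 fun p hp => ?_)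
    rw [← hp.succ_eq] at h
    obtain ⟨_, ⟨r, rfl⟩, hr, hr'⟩ := h (β * p) (mul_lt_mul_of_pos_left (Order.lt_succ p) hβ)
    exact (Order.lt_succ_iff.1 (lt_of_mul_lt_mul_left' hr')).not_gt (lt_of_mul_lt_mul_left' hr)

theorem omega0_opow_dvd_iff_of_isSuccLimit {a x : Ordinal.{u}} (ha : Order.IsSuccLimit a) :
    ω ^ a ∣ x ↔ ∀ b < a, ω ^ b ∣ x := by
  refine ⟨fun h b hb => (opow_dvd_opow ω hb.le).trans h, fun h => dvd_of_mod_eq_zero ?_⟩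
  obtain ⟨b, hb, hlt⟩ := (lt_opow_of_isSuccLimit omega0_ne_zero ha).1
    (mod_lt x (opow_pos a omega0_pos).ne')
  have hdvd : ω ^ b ∣ x % ω ^ a :=
    (dvd_add_iff ((opow_dvd_opow ω hb.le).trans (dvd_mul_right _ (x / ω ^ a)))).1
      ((div_add_mod x (ω ^ a)).symm ▸ h b hb)
  exact by_contra fun hne => (le_of_dvd hne hdvd).not_gt hlt

theorem omega0_opow_add_one_dvd_iff {γ a : Ordinal.{u}} {x : OrdIcc γ} :
    ω ^ (a + 1) ∣ (x : Ordinal) ↔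
      x ∈ derivedSet (Subtype.val ⁻¹' {y | ω ^ a ∣ y} : Set (OrdIcc γ)) := by
  rw [opow_add_one, mul_omega0_dvd_iff (zero_lt_one.trans_le x.2.1), mem_derivedSet_OrdIcc_iff]
  rfl

/-- The points divisible by `ω ^ a` form the `a`-th Cantor–Bendixson derivative. -/
theorem omega0_opow_dvd_apply {γ δ : Ordinal.{u}} {g : OrdIcc γ → OrdIcc δ} (hg : Continuous g)
    (hinj : g.Injective) (a : Ordinal.{u}) {x : OrdIcc γ} (hx : ω ^ a ∣ (x : Ordinal)) :
    ω ^ a ∣ (g x : Ordinal) := by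
  induction a using limitRecOn generalizing x with
  | zero => rw [opow_zero]; exact one_dvd _
  | add_one a ih =>
    rw [omega0_opow_add_one_dvd_iff] at hx ⊢
    have hsubset : g '' (Subtype.val ⁻¹' {y | ω ^ a ∣ y}) ⊆ Subtype.val ⁻¹' {y | ω ^ a ∣ y} :=
      Set.image_subset_iff.2 fun y hy => ih hy
    exact derivedSet_mono _ _ hsubset (hg.image_derivedSet hinj (Set.mem_image_of_mem g hx))
  | limit a ha ih =>
    rw [omega0_opow_dvd_iff_of_isSuccLimit ha] at hx ⊢
    exact fun b hb => ih b hb (hx b hb)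

theorem apply_eq_of_coe_eq_omega0_opow {α : Ordinal.{u}} {g : OrdIcc (ω ^ α) → OrdIcc (ω ^ α)}
    (hg : Continuous g) (hinj : g.Injective) {x : OrdIcc (ω ^ α)} (hx : (x : Ordinal) = ω ^ α) :
    g x = x := by
  refine Subtype.ext (((g x).2.2.antisymm ?_).trans hx.symm)
  exact le_of_dvd (zero_lt_one.trans_le (g x).2.1).ne'
    (omega0_opow_dvd_apply hg hinj α hx.symm.dvd)

end DerivedSets

theorem no_proper_normal_subgroup_small_index_general {α : Ordinal.{u}}
    (hα : α.cof ≤ Cardinal.aleph0) :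
    NoProperNormalOfSmallIndex (OrdIcc (ω ^ α) ≃ₜ OrdIcc (ω ^ α)) := by
  obtain rfl | hα0 := eq_or_ne α 0
  · rw [opow_zero]
    have hsub : Subsingleton (OrdIcc 1) := (Set.subsingleton_Icc_of_ge le_rfl).coe_sort
    have htrivial : Subsingleton (OrdIcc 1 ≃ₜ OrdIcc 1) := DFunLike.subsingleton_cod
    exact fun N _ _ => Subsingleton.elim N ⊤
  · obtain ⟨c, hpos, hlt, hc⟩ := exists_seq_of_cof_eq_aleph0 (cof_omega0_opow hα0 hα)
    obtain ⟨p, hp⟩ := exists_isAbsorbing_Ioo hpos (isPrincipal_add_omega0_opow α) hlt hc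
    have hsub : Set.Ioo 0 (ω ^ α) ⊆ Set.Icc 1 (ω ^ α) :=
      fun x hx => ⟨Order.one_le_iff_pos.2 hx.1, hx.2.le⟩
    let top : OrdIcc (ω ^ α) := ⟨ω ^ α, Order.one_le_iff_pos.2 (opow_pos α omega0_pos), le_rfl⟩
    have hrange : Set.range (Set.inclusion hsub) = {top}ᶜ := by
      ext x
      rw [Set.range_inclusion]
      exact ⟨fun hx h => hx.2.ne (congrArg Subtype.val h), fun hx =>
        ⟨Order.one_le_iff_pos.1 x.2.1, x.2.2.lt_of_ne fun h => hx (Subtype.ext h)⟩⟩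
    have hcompact : CompactSpace (OrdIcc (ω ^ α)) := isCompact_iff_compactSpace.1 isCompact_Icc
    exact hp.noProperNormalOfSmallIndex.of_isEmbedding_compl_singleton
      (IsEmbedding.inclusion hsub) hrange
      fun g => apply_eq_of_coe_eq_omega0_opow g.continuous g.injective rfl

/-- For a positive natural number `α`, the group `G` of homeomorphisms of
`X = [1, ω^α]` has no proper normal subgroup of index `< 2^ℵ₀`: any normal subgroup of
index (as a cardinal) strictly less than `2^ℵ₀` is the whole group. -/
theorem no_proper_normal_subgroup_small_index (α : ℕ) (hα : 0 < α)
    (N : Subgroup (OrdIcc (omega0 ^ (α : Ordinal)) ≃ₜ OrdIcc (omega0 ^ (α : Ordinal))))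
    (hNnormal : N.Normal)
    (hN : Cardinal.mk ((OrdIcc (omega0 ^ (α : Ordinal)) ≃ₜ OrdIcc (omega0 ^ (α : Ordinal))) ⧸ N)
      < 2 ^ Cardinal.aleph0) :
    N = ⊤ :=
  no_proper_normal_subgroup_small_index_general
    ((cof_le_card α).trans ((card_nat α).trans_le Cardinal.natCast_lt_aleph0.le)) N hNnormal hN
end
end
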